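/- Satisfiability and subsumption of SHIQ-concepts with respect to terminologies and role hierarchies are decidable: over a fixed countable effectively encoded signature, there is a computable function that, given a SHIQ-concept C, a terminology T, and a finite set R of role inclusion axioms, returns true if and only if C is satisfiable with respect to T and R⁺ (and hence also a computable function deciding whether D subsumes C with respect to T and R⁺). -/

import Mathlib

/-- SHIQ-roles: role names (indexed by ℕ) and their inverses. -/
inductive Role where
  | atom : ℕ → Role
  | inv  : ℕ → Role
deriving DecidableEq

/-- The function `Inv` on roles: `Inv(R) = R⁻`, `Inv(R⁻) = R`. -/
def Role.Inv : Role → Role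
  | .atom r => .inv r
  | .inv r  => .atom r

/-- The underlying role name of a (possibly inverse) role. -/
def Role.name : Role → ℕ
  | .atom r => r
  | .inv r  => r

/-- Concepts of the SHIQ family (with ⊤ and ⊥ for convenience). -/
inductive DLConcept where
  | top : DLConcept
  | bot : DLConcept
  | atom : ℕ → DLConcept
  | neg : DLConcept → DLConcept
  | and : DLConcept → DLConcept → DLConcept
  | or : DLConcept → DLConcept → DLConcept
  | all : Role → DLConcept → DLConcept
  | ex : Role → DLConcept → DLConcept
  | atleast : ℕ → Role → DLConcept → DLConcept
  | atmost : ℕ → Role → DLConcept → DLConcept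
deriving DecidableEq

/-- An interpretation: a (nonempty) domain, a valuation of concept names and
    of role names. -/
structure Interp where
  Dom : Type
  dom_nonempty : Nonempty Dom
  cI : ℕ → Set Dom
  rI : ℕ → Dom → Dom → Prop

/-- Semantics of (possibly inverse) roles. -/
def Interp.rSem (I : Interp) : Role → I.Dom → I.Dom → Prop
  | .atom r => I.rI r
  | .inv r  => fun x y => I.rI r y x

/-- Semantics of concepts; number restrictions are interpreted by counting
    role successors (via cardinalities, so that infinite sets are handled
    correctly). -/
def Interp.cSem (I : Interp) : DLConcept → Set I.Dom
  | .top => Set.univ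
  | .bot => ∅
  | .atom a => I.cI a
  | .neg C => (I.cSem C)ᶜ
  | .and C D => I.cSem C ∩ I.cSem D
  | .or C D => I.cSem C ∪ I.cSem D
  | .all R C => {x | ∀ y, I.rSem R x y → y ∈ I.cSem C}
  | .ex R C => {x | ∃ y, I.rSem R x y ∧ y ∈ I.cSem C}
  | .atleast n R C => {x | (n : Cardinal) ≤ Cardinal.mk {y // I.rSem R x y ∧ y ∈ I.cSem C}}
  | .atmost n R C => {x | Cardinal.mk {y // I.rSem R x y ∧ y ∈ I.cSem C} ≤ (n : Cardinal)}

/-- `I.Good Rp`: the interpretation interprets every transitive role name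
    (member of `Rp`) by a transitive relation. -/
def Interp.Good (I : Interp) (Rp : Set ℕ) : Prop :=
  ∀ r ∈ Rp, Transitive (I.rI r)

/-- The role hierarchy ⊑* generated by a finite set of role inclusion axioms:
    inverses are added and the transitive-reflexive closure is taken. -/
def SubRole (RIA : List (Role × Role)) : Role → Role → Prop :=
  Relation.ReflTransGen (fun R S => (R, S) ∈ RIA ∨ (R.Inv, S.Inv) ∈ RIA)

/-- `I ⊨ R⁺`: the interpretation satisfies the role hierarchy. -/
def Interp.ModelsRH (I : Interp) (RIA : List (Role × Role)) : Prop :=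
  ∀ R S, SubRole RIA R S → ∀ x y, I.rSem R x y → I.rSem S x y

/-- `Trans(R)`: a (possibly inverse) role is transitive iff its name is in `Rp`. -/
def RTrans (Rp : Set ℕ) : Role → Prop
  | .atom r => r ∈ Rp
  | .inv r  => r ∈ Rp

/-- A role is simple iff it is neither transitive nor has a transitive sub-role. -/
def SimpleRole (Rp : Set ℕ) (RIA : List (Role × Role)) (R : Role) : Prop :=
  ∀ S, SubRole RIA S R → ¬ RTrans Rp S

/-- SHIQ-concepts: number restrictions occur only on simple roles. -/
def DLConcept.IsSHIQ (Rp : Set ℕ) (RIA : List (Role × Role)) : DLConcept → Prop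
  | .top | .bot | .atom _ => True
  | .neg C => C.IsSHIQ Rp RIA
  | .and C D | .or C D => C.IsSHIQ Rp RIA ∧ D.IsSHIQ Rp RIA
  | .all _ C | .ex _ C => C.IsSHIQ Rp RIA
  | .atleast _ R C | .atmost _ R C => SimpleRole Rp RIA R ∧ C.IsSHIQ Rp RIA

/-- Satisfiability of a concept w.r.t. a role hierarchy. -/
def Satisfiable (Rp : Set ℕ) (RIA : List (Role × Role)) (C : DLConcept) : Prop :=
  ∃ I : Interp, I.Good Rp ∧ I.ModelsRH RIA ∧ (I.cSem C).Nonempty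

/-- Subsumption of concepts w.r.t. a role hierarchy. -/
def Subsumes (Rp : Set ℕ) (RIA : List (Role × Role)) (C D : DLConcept) : Prop :=
  ∀ I : Interp, I.Good Rp → I.ModelsRH RIA → I.cSem C ⊆ I.cSem D
/-- A terminology: a finite list of general concept inclusion axioms `C ⊑ D`. -/
abbrev Terminology := List (DLConcept × DLConcept)

/-- `I` is a model of the terminology `T`. -/
def Interp.ModelsT (I : Interp) (T : Terminology) : Prop :=
  ∀ p ∈ T, I.cSem p.1 ⊆ I.cSem p.2

/-- Satisfiability w.r.t. a terminology and a role hierarchy. -/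
def SatisfiableT (Rp : Set ℕ) (RIA : List (Role × Role)) (T : Terminology)
    (C : DLConcept) : Prop :=
  ∃ I : Interp, I.Good Rp ∧ I.ModelsRH RIA ∧ I.ModelsT T ∧ (I.cSem C).Nonempty

/-- Subsumption w.r.t. a terminology and a role hierarchy. -/
def SubsumesT (Rp : Set ℕ) (RIA : List (Role × Role)) (T : Terminology)
    (C D : DLConcept) : Prop :=
  ∀ I : Interp, I.Good Rp → I.ModelsRH RIA → I.ModelsT T → I.cSem C ⊆ I.cSem D

/-- `C_T`: the conjunction of all `¬Cᵢ ⊔ Dᵢ` for `Cᵢ ⊑ Dᵢ ∈ T`. -/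
def CT (T : Terminology) : DLConcept :=
  T.foldr (fun p acc => DLConcept.and (DLConcept.or (DLConcept.neg p.1) p.2) acc) DLConcept.top

/-- The role names occurring in a concept. -/
def DLConcept.roleNames : DLConcept → Finset ℕ
  | .top | .bot | .atom _ => ∅
  | .neg C => C.roleNames
  | .and C D | .or C D => C.roleNames ∪ D.roleNames
  | .all R C | .ex R C => insert R.name C.roleNames
  | .atleast _ R C | .atmost _ R C => insert R.name C.roleNames

/-- The role names occurring in a terminology. -/
def termRoleNames (T : Terminology) : Finset ℕ :=
  T.foldr (fun p acc => p.1.roleNames ∪ p.2.roleNames ∪ acc) ∅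

/-- The role names occurring in a set of role inclusion axioms. -/
def riaRoleNames (RIA : List (Role × Role)) : Finset ℕ :=
  RIA.foldr (fun p acc => insert p.1.name (insert p.2.name acc)) ∅

/-- `R_U`: the given role inclusion axioms extended with `R ⊑ U` and
    `Inv(R) ⊑ U` for every role (name) `r` in `names`. -/
def addU (RIA : List (Role × Role)) (names : Finset ℕ) (u : ℕ) : List (Role × Role) :=
  RIA ++ (names.sort (· ≤ ·)).map (fun r => (Role.atom r, Role.atom u))
      ++ (names.sort (· ≤ ·)).map (fun r => (Role.inv r, Role.atom u))

/-- An effective encoding of roles. -/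
def Role.code : Role → ℕ
  | .atom n => 2 * n
  | .inv n => 2 * n + 1

/-- An effective encoding of concepts. -/
def DLConcept.code : DLConcept → ℕ
  | .top => Nat.pair 0 0
  | .bot => Nat.pair 1 0
  | .atom a => Nat.pair 2 a
  | .neg C => Nat.pair 3 C.code
  | .and C D => Nat.pair 4 (Nat.pair C.code D.code)
  | .or C D => Nat.pair 5 (Nat.pair C.code D.code)
  | .all R C => Nat.pair 6 (Nat.pair R.code C.code)
  | .ex R C => Nat.pair 7 (Nat.pair R.code C.code)
  | .atleast n R C => Nat.pair 8 (Nat.pair n (Nat.pair R.code C.code))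
  | .atmost n R C => Nat.pair 9 (Nat.pair n (Nat.pair R.code C.code))

/-- An effective encoding of lists of naturals. -/
def natListCode : List ℕ → ℕ
  | [] => 0
  | a :: l => Nat.pair a (natListCode l) + 1

/-- An effective encoding of finite sets of role inclusion axioms. -/
def riaCode (RIA : List (Role × Role)) : ℕ :=
  natListCode (RIA.map fun p => Nat.pair p.1.code p.2.code)

/-- The fixed set of transitive role names: the even role names (so that both the
transitive role names and the other role names form countably infinite,
effectively decidable sets). -/
def evenRp : Set ℕ := {n | n % 2 = 0}

/-- An effective encoding of terminologies. -/
def termCode (T : Terminology) : ℕ :=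
  natListCode (T.map fun p => Nat.pair p.1.code p.2.code)

namespace SHIQDec

/-! ### Arithmetic coding -/

/-- `i`-th digit of `L` in base `b`. -/
def dig (b L i : ℕ) : ℕ := L / b ^ i % b

/-- `m` belongs to the finite set coded by `t`. -/
def bit (t m : ℕ) : Prop := dig 2 t m = 1

def tl (h : ℕ) : ℕ := (h - 1).unpair.2

def Mem (h x : ℕ) : Prop := ∃ i < h, tl^[i] h ≠ 0 ∧ (tl^[i] h - 1).unpair.1 = x

def rinv (r : ℕ) : ℕ := if r % 2 = 0 then r + 1 else r - 1

def Step (h a b : ℕ) : Prop := Mem h (Nat.pair a b) ∨ Mem h (Nat.pair (rinv a) (rinv b))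

def SubR (M h r s : ℕ) : Prop :=
  ∀ u < 2 ^ M, (bit u r ∧ ∀ a < M, ∀ b < M, (Step h a b ∧ bit u a) → bit u b) → bit u s

def TrR (r : ℕ) : Prop := r / 2 % 2 = 0

def NN (M : ℕ) : ℕ := Nat.pair 9 (Nat.pair M (Nat.pair M M))
def BB (M : ℕ) : ℕ := 2 * M * M * M + 1
def DD (M : ℕ) : ℕ := Nat.pair (2 ^ M) (2 ^ NN M)
def KK (M : ℕ) : ℕ := Nat.pair (2 ^ NN M) (DD M ^ BB M)

/-- type of a star -/
def ty (σ : ℕ) : ℕ := σ.unpair.1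
/-- role set of the `i`-th neighbour -/
def ne (M σ i : ℕ) : ℕ := (dig (DD M) σ.unpair.2 i).unpair.1
/-- type of the `i`-th neighbour -/
def nt (M σ i : ℕ) : ℕ := (dig (DD M) σ.unpair.2 i).unpair.2

def cAnd (c d : ℕ) : ℕ := Nat.pair 4 (Nat.pair c d)
def cOr (c d : ℕ) : ℕ := Nat.pair 5 (Nat.pair c d)
def cAll (r c : ℕ) : ℕ := Nat.pair 6 (Nat.pair r c)
def cEx (r c : ℕ) : ℕ := Nat.pair 7 (Nat.pair r c)
def cGe (n r c : ℕ) : ℕ := Nat.pair 8 (Nat.pair n (Nat.pair r c))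
def cLe (n r c : ℕ) : ℕ := Nat.pair 9 (Nat.pair n (Nat.pair r c))

open Classical in
noncomputable def cnt (M σ r c : ℕ) : ℕ :=
  Nat.count (fun i => bit (ne M σ i) r ∧ bit (nt M σ i) c) (BB M)

/-- Boolean conditions and terminology. -/
def LocBool (M T σ : ℕ) : Prop :=
  (bit (ty σ) (Nat.pair 0 0) ∧ ¬ bit (ty σ) (Nat.pair 1 0)) ∧
  (∀ c < M, (bit (ty σ) (Nat.pair 3 c) ↔ ¬ bit (ty σ) c)) ∧
  (∀ c < M, ∀ d < M, (bit (ty σ) (cAnd c d) ↔ bit (ty σ) c ∧ bit (ty σ) d)) ∧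
  (∀ c < M, ∀ d < M, (bit (ty σ) (cOr c d) ↔ bit (ty σ) c ∨ bit (ty σ) d)) ∧
  (∀ c < M, ∀ d < M, Mem T (Nat.pair c d) ∧ bit (ty σ) c → bit (ty σ) d)

/-- Role hierarchy and propagation along edges. -/
def LocProp (M h σ : ℕ) : Prop :=
  (∀ i < BB M, ∀ r < M, ∀ s < M, bit (ne M σ i) r ∧ SubR M h r s → bit (ne M σ i) s) ∧
  (∀ i < BB M, ∀ r < M, ∀ c < M, bit (ne M σ i) r →
    ((bit (ty σ) (cAll r c) → bit (nt M σ i) c) ∧ (bit (nt M σ i) c → bit (ty σ) (cEx r c)))) ∧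
  (∀ i < BB M, ∀ q < M, ∀ s < M, ∀ c < M, bit (ne M σ i) q ∧ TrR q ∧ SubR M h q s →
    ((bit (ty σ) (cAll s c) → bit (nt M σ i) (cAll q c)) ∧
      (bit (nt M σ i) (cEx q c) → bit (ty σ) (cEx s c))))

/-- Witnesses and counting. -/
def LocWit (M σ : ℕ) : Prop :=
  (∀ r < M, ∀ c < M, bit (ty σ) (cEx r c) → ∃ i < BB M, bit (ne M σ i) r ∧ bit (nt M σ i) c) ∧
  (∀ r < M, ∀ c < M, ¬ bit (ty σ) (cAll r c) →
    ∃ i < BB M, bit (ne M σ i) r ∧ ¬ bit (nt M σ i) c) ∧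
  (∀ n < M, ∀ r < M, ∀ c < M, (bit (ty σ) (cGe n r c) ↔ n ≤ cnt M σ r c)) ∧
  (∀ n < M, ∀ r < M, ∀ c < M, (bit (ty σ) (cLe n r c) ↔ cnt M σ r c ≤ n))

def slot (M σ i : ℕ) : Prop := ∃ r < M, bit (ne M σ i) r

/-- the `j`-th slot of `τ` is the converse of the `i`-th slot of `σ` -/
def Match (M σ i τ j : ℕ) : Prop :=
  ty τ = nt M σ i ∧ nt M τ j = ty σ ∧ slot M τ j ∧
    ∀ r < M, (bit (ne M τ j) r ↔ bit (ne M σ i) (rinv r))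

def Wit (M c T h w : ℕ) : Prop :=
  (∃ σ < KK M, bit w σ ∧ bit (ty σ) c) ∧
  ∀ σ < KK M, bit w σ → ((LocBool M T σ ∧ LocProp M h σ ∧ LocWit M σ) ∧
    ∀ i < BB M, slot M σ i → ∃ τ < KK M, bit w τ ∧ ∃ j < BB M, Match M σ i τ j)

def SatCode (M c T h : ℕ) : Prop := ∃ w < 2 ^ KK M, Wit M c T h w

/-! ### Primitive recursiveness -/

section prim
variable {α : Type} [Primcodable α]

theorem p_fst {β γ : Type} [Primcodable β] [Primcodable γ] {f : α → β × γ} (hf : Primrec f) :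
    Primrec fun a => (f a).1 := Primrec.fst.comp hf
theorem p_snd {β γ : Type} [Primcodable β] [Primcodable γ] {f : α → β × γ} (hf : Primrec f) :
    Primrec fun a => (f a).2 := Primrec.snd.comp hf
theorem p_id : Primrec fun a : α => a := Primrec.id
theorem p_const (n : ℕ) : Primrec fun _ : α => n := Primrec.const n
theorem p_add {f g : α → ℕ} (hf : Primrec f) (hg : Primrec g) : Primrec fun a => f a + g a :=
  Primrec.nat_add.comp hf hg
theorem p_sub {f g : α → ℕ} (hf : Primrec f) (hg : Primrec g) : Primrec fun a => f a - g a :=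
  Primrec.nat_sub.comp hf hg
theorem p_mul {f g : α → ℕ} (hf : Primrec f) (hg : Primrec g) : Primrec fun a => f a * g a :=
  Primrec.nat_mul.comp hf hg
theorem p_div {f g : α → ℕ} (hf : Primrec f) (hg : Primrec g) : Primrec fun a => f a / g a :=
  Primrec.nat_div.comp hf hg
theorem p_mod {f g : α → ℕ} (hf : Primrec f) (hg : Primrec g) : Primrec fun a => f a % g a :=
  Primrec.nat_mod.comp hf hg
theorem p_pow {f g : α → ℕ} (hf : Primrec f) (hg : Primrec g) : Primrec fun a => f a ^ g a :=
  (Primrec₂.unpaired'.1 Nat.Primrec.pow).comp hf hg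
theorem p_pair {f g : α → ℕ} (hf : Primrec f) (hg : Primrec g) :
    Primrec fun a => Nat.pair (f a) (g a) :=
  Primrec₂.natPair.comp hf hg
theorem p_unpair {f : α → ℕ} (hf : Primrec f) : Primrec fun a => Nat.unpair (f a) :=
  Primrec.unpair.comp hf

theorem p_eq {f g : α → ℕ} (hf : Primrec f) (hg : Primrec g) : PrimrecPred fun a => f a = g a :=
  Primrec.eq.comp hf hg
theorem p_le {f g : α → ℕ} (hf : Primrec f) (hg : Primrec g) : PrimrecPred fun a => f a ≤ g a :=
  Primrec.nat_le.comp hf hg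
theorem p_and {P Q : α → Prop} (hf : PrimrecPred P) (hg : PrimrecPred Q) :
    PrimrecPred fun a => P a ∧ Q a := hf.and hg
theorem p_or {P Q : α → Prop} (hf : PrimrecPred P) (hg : PrimrecPred Q) :
    PrimrecPred fun a => P a ∨ Q a := hf.or hg
theorem p_not {P : α → Prop} (hf : PrimrecPred P) :
    PrimrecPred fun a => ¬ P a := hf.not
theorem p_ne {f g : α → ℕ} (hf : Primrec f) (hg : Primrec g) : PrimrecPred fun a => f a ≠ g a :=
  (p_eq hf hg).not
theorem p_imp {P Q : α → Prop} (hf : PrimrecPred P) (hg : PrimrecPred Q) :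
    PrimrecPred fun a => P a → Q a := (hf.not.or hg).of_eq fun a => by tauto
theorem p_iff {P Q : α → Prop} (hf : PrimrecPred P) (hg : PrimrecPred Q) :
    PrimrecPred fun a => P a ↔ Q a :=
  ((p_imp hf hg).and (p_imp hg hf)).of_eq fun a => by tauto

theorem p_ball {f : α → ℕ} {P : α → ℕ → Prop} (hf : Primrec f)
    (hP : PrimrecPred fun p : α × ℕ => P p.1 p.2) : PrimrecPred fun a => ∀ x < f a, P a x := by
  have h : PrimrecRel fun (x : ℕ) (a : α) => P a x :=
    hP.comp (p := fun p : α × ℕ => P p.1 p.2) (f := fun q : ℕ × α => (q.2, q.1))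
      (Primrec.pair Primrec.snd Primrec.fst)
  exact (h.forall_mem_list.comp (Primrec.list_range.comp hf) p_id).of_eq fun a => by simp

theorem p_bex {f : α → ℕ} {P : α → ℕ → Prop} (hf : Primrec f)
    (hP : PrimrecPred fun p : α × ℕ => P p.1 p.2) : PrimrecPred fun a => ∃ x < f a, P a x := by
  have h : PrimrecRel fun (x : ℕ) (a : α) => P a x :=
    hP.comp (p := fun p : α × ℕ => P p.1 p.2) (f := fun q : ℕ × α => (q.2, q.1))
      (Primrec.pair Primrec.snd Primrec.fst)
  exact (h.exists_mem_list.comp (Primrec.list_range.comp hf) p_id).of_eq fun a => by simp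

open Classical in
theorem p_count {f : α → ℕ} {P : α → ℕ → Prop} (hf : Primrec f)
    (hP : PrimrecPred fun p : α × ℕ => P p.1 p.2) :
    Primrec fun a => Nat.count (P a) (f a) := by
  have hite : Primrec fun p : α × ℕ × ℕ => p.2.2 + if P p.1 p.2.1 then 1 else 0 := by
    refine p_add (p_snd (p_snd p_id)) ?_
    refine Primrec.ite ?_ (p_const 1) (p_const 0)
    exact hP.comp (p := fun p : α × ℕ => P p.1 p.2) (f := fun q : α × ℕ × ℕ => (q.1, q.2.1))
      (Primrec.pair (p_fst p_id) (p_fst (p_snd p_id)))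
  have := Primrec.nat_rec' (f := f) (g := fun _ : α => 0)
    (h := fun a (q : ℕ × ℕ) => q.2 + if P a q.1 then 1 else 0) hf (p_const 0) hite
  refine this.of_eq fun a => ?_
  induction f a with
  | zero => simp
  | succ n ih => rw [Nat.count_succ, ← ih]

theorem p_dig {f g h : α → ℕ} (hf : Primrec f) (hg : Primrec g) (hh : Primrec h) :
    Primrec fun a => dig (f a) (g a) (h a) := p_mod (p_div hg (p_pow hf hh)) hf

theorem p_bit {g h : α → ℕ} (hg : Primrec g) (hh : Primrec h) :
    PrimrecPred fun a => bit (g a) (h a) := p_eq (p_dig (p_const 2) hg hh) (p_const 1)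

theorem p_tl {f g : α → ℕ} (hf : Primrec f) (hg : Primrec g) :
    Primrec fun a => tl^[f a] (g a) :=
  Primrec.nat_iterate hf hg (h := fun _ x => tl x)
    (p_snd (p_unpair (p_sub (p_snd p_id) (p_const 1))))

theorem p_Mem {f g : α → ℕ} (hf : Primrec f) (hg : Primrec g) :
    PrimrecPred fun a => Mem (f a) (g a) := by
  have h1 : Primrec fun p : α × ℕ => tl^[p.2] (f p.1) :=
    p_tl (p_snd p_id) (hf.comp (p_fst p_id))
  exact p_bex hf (p_and (p_ne h1 (p_const 0))
    (p_eq (p_fst (p_unpair (p_sub h1 (p_const 1)))) (hg.comp (p_fst p_id))))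

theorem p_rinv {f : α → ℕ} (hf : Primrec f) : Primrec fun a => rinv (f a) :=
  Primrec.ite (p_eq (p_mod hf (p_const 2)) (p_const 0)) (p_add hf (p_const 1))
    (p_sub hf (p_const 1))

theorem p_Step {f g h : α → ℕ} (hf : Primrec f) (hg : Primrec g) (hh : Primrec h) :
    PrimrecPred fun a => Step (f a) (g a) (h a) :=
  p_or (p_Mem hf (p_pair hg hh)) (p_Mem hf (p_pair (p_rinv hg) (p_rinv hh)))

theorem p_SubR {f g h k : α → ℕ} (hf : Primrec f) (hg : Primrec g) (hh : Primrec h)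
    (hk : Primrec k) : PrimrecPred fun a => SubR (f a) (g a) (h a) (k a) := by
  have : PrimrecPred fun a : (ℕ × ℕ) × (ℕ × ℕ) => SubR a.1.1 a.1.2 a.2.1 a.2.2 := by
    unfold SubR
    with_reducible repeat' first
      | exact p_id | exact p_const _ | apply p_ball | apply p_imp | apply p_and | apply p_Step
      | apply p_bit | apply p_pow | apply p_fst | apply p_snd
  exact this.comp (f := fun a => ((f a, g a), (h a, k a))) ((hf.pair hg).pair (hh.pair hk))

theorem p_TrR {f : α → ℕ} (hf : Primrec f) : PrimrecPred fun a => TrR (f a) :=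
  p_eq (p_mod (p_div hf (p_const 2)) (p_const 2)) (p_const 0)

theorem p_NN {f : α → ℕ} (hf : Primrec f) : Primrec fun a => NN (f a) :=
  p_pair (p_const 9) (p_pair hf (p_pair hf hf))
theorem p_BB {f : α → ℕ} (hf : Primrec f) : Primrec fun a => BB (f a) :=
  p_add (p_mul (p_mul (p_mul (p_const 2) hf) hf) hf) (p_const 1)
theorem p_DD {f : α → ℕ} (hf : Primrec f) : Primrec fun a => DD (f a) :=
  p_pair (p_pow (p_const 2) hf) (p_pow (p_const 2) (p_NN hf))
theorem p_KK {f : α → ℕ} (hf : Primrec f) : Primrec fun a => KK (f a) :=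
  p_pair (p_pow (p_const 2) (p_NN hf)) (p_pow (p_DD hf) (p_BB hf))
theorem p_ty {f : α → ℕ} (hf : Primrec f) : Primrec fun a => ty (f a) := p_fst (p_unpair hf)
theorem p_nne {f g h : α → ℕ} (hf : Primrec f) (hg : Primrec g) (hh : Primrec h) :
    Primrec fun a => ne (f a) (g a) (h a) :=
  p_fst (p_unpair (p_dig (p_DD hf) (p_snd (p_unpair hg)) hh))
theorem p_nt {f g h : α → ℕ} (hf : Primrec f) (hg : Primrec g) (hh : Primrec h) :
    Primrec fun a => nt (f a) (g a) (h a) :=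
  p_snd (p_unpair (p_dig (p_DD hf) (p_snd (p_unpair hg)) hh))
theorem p_cAnd {f g : α → ℕ} (hf : Primrec f) (hg : Primrec g) :
    Primrec fun a => cAnd (f a) (g a) := p_pair (p_const 4) (p_pair hf hg)
theorem p_cOr {f g : α → ℕ} (hf : Primrec f) (hg : Primrec g) :
    Primrec fun a => cOr (f a) (g a) := p_pair (p_const 5) (p_pair hf hg)
theorem p_cAll {f g : α → ℕ} (hf : Primrec f) (hg : Primrec g) :
    Primrec fun a => cAll (f a) (g a) := p_pair (p_const 6) (p_pair hf hg)
theorem p_cEx {f g : α → ℕ} (hf : Primrec f) (hg : Primrec g) :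
    Primrec fun a => cEx (f a) (g a) := p_pair (p_const 7) (p_pair hf hg)
theorem p_cGe {f g h : α → ℕ} (hf : Primrec f) (hg : Primrec g) (hh : Primrec h) :
    Primrec fun a => cGe (f a) (g a) (h a) := p_pair (p_const 8) (p_pair hf (p_pair hg hh))
theorem p_cLe {f g h : α → ℕ} (hf : Primrec f) (hg : Primrec g) (hh : Primrec h) :
    Primrec fun a => cLe (f a) (g a) (h a) := p_pair (p_const 9) (p_pair hf (p_pair hg hh))

theorem p_cnt {f g h k : α → ℕ} (hf : Primrec f) (hg : Primrec g) (hh : Primrec h)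
    (hk : Primrec k) : Primrec fun a => cnt (f a) (g a) (h a) (k a) := by
  have c {u : α → ℕ} (hu : Primrec u) : Primrec fun p : α × ℕ => u p.1 := hu.comp (p_fst p_id)
  refine (p_count (P := fun a i => bit (ne (f a) (g a) i) (h a) ∧ bit (nt (f a) (g a) i) (k a))
    (p_BB hf) (p_and (p_bit (p_nne (c hf) (c hg) (p_snd p_id)) (c hh))
    (p_bit (p_nt (c hf) (c hg) (p_snd p_id)) (c hk)))).of_eq fun a => ?_
  unfold cnt
  congr

theorem p_LocBool {f g h : α → ℕ} (hf : Primrec f) (hg : Primrec g) (hh : Primrec h) :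
    PrimrecPred fun a => LocBool (f a) (g a) (h a) := by
  have : PrimrecPred fun a : ℕ × (ℕ × ℕ) => LocBool a.1 a.2.1 a.2.2 := by
    unfold LocBool
    with_reducible repeat' first
      | exact p_id | exact p_const _ | apply p_ball | apply p_and | apply p_iff | apply p_not
      | apply p_or | apply p_imp | apply p_Mem
      | apply p_bit | apply p_ty | apply p_cAnd | apply p_cOr | apply p_pair
      | apply p_fst | apply p_snd
  exact this.comp (f := fun a => (f a, (g a, h a))) (hf.pair (hg.pair hh))

theorem p_LocProp {f g h : α → ℕ} (hf : Primrec f) (hg : Primrec g) (hh : Primrec h) :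
    PrimrecPred fun a => LocProp (f a) (g a) (h a) := by
  have : PrimrecPred fun a : ℕ × (ℕ × ℕ) => LocProp a.1 a.2.1 a.2.2 := by
    unfold LocProp
    with_reducible repeat' first
      | exact p_id | exact p_const _ | apply p_SubR | apply p_TrR | apply p_bit | apply p_ball
      | apply p_and | apply p_imp
      | apply p_ty | apply p_nne | apply p_nt | apply p_BB | apply p_cAll | apply p_cEx
      | apply p_fst | apply p_snd
  exact this.comp (f := fun a => (f a, (g a, h a))) (hf.pair (hg.pair hh))

theorem p_LocWit {f g : α → ℕ} (hf : Primrec f) (hg : Primrec g) :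
    PrimrecPred fun a => LocWit (f a) (g a) := by
  have : PrimrecPred fun a : ℕ × ℕ => LocWit a.1 a.2 := by
    unfold LocWit
    with_reducible repeat' first
      | exact p_id | exact p_const _ | apply p_bit | apply p_ball | apply p_bex
      | apply p_and | apply p_iff | apply p_not | apply p_imp | apply p_le | apply p_cnt
      | apply p_ty | apply p_nne | apply p_nt | apply p_BB | apply p_cAll | apply p_cEx
      | apply p_cGe | apply p_cLe | apply p_fst | apply p_snd
  exact this.comp (f := fun a => (f a, g a)) (hf.pair hg)

theorem p_slot {f g h : α → ℕ} (hf : Primrec f) (hg : Primrec g) (hh : Primrec h) :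
    PrimrecPred fun a => slot (f a) (g a) (h a) := by
  have c {u : α → ℕ} (hu : Primrec u) : Primrec fun p : α × ℕ => u p.1 := hu.comp (p_fst p_id)
  exact p_bex hf (p_bit (p_nne (c hf) (c hg) (c hh)) (p_snd p_id))

theorem p_Match {f g h k l : α → ℕ} (hf : Primrec f) (hg : Primrec g) (hh : Primrec h)
    (hk : Primrec k) (hl : Primrec l) :
    PrimrecPred fun a => Match (f a) (g a) (h a) (k a) (l a) := by
  have c {u : α → ℕ} (hu : Primrec u) : Primrec fun p : α × ℕ => u p.1 := hu.comp (p_fst p_id)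
  exact p_and (p_eq (p_ty hk) (p_nt hf hg hh)) (p_and (p_eq (p_nt hf hk hl) (p_ty hg))
    (p_and (p_slot hf hk hl) (p_ball hf (p_iff (p_bit (p_nne (c hf) (c hk) (c hl)) (p_snd p_id))
      (p_bit (p_nne (c hf) (c hg) (c hh)) (p_rinv (p_snd p_id)))))))

theorem p_SatCode {f g h k : α → ℕ} (hf : Primrec f) (hg : Primrec g) (hh : Primrec h)
    (hk : Primrec k) : PrimrecPred fun a => SatCode (f a) (g a) (h a) (k a) := by
  have : PrimrecPred fun a : (ℕ × ℕ) × (ℕ × ℕ) => SatCode a.1.1 a.1.2 a.2.1 a.2.2 := by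
    unfold SatCode Wit
    with_reducible repeat' first
      | exact p_id | exact p_const _ | apply p_LocBool | apply p_LocProp | apply p_LocWit
      | apply p_Match | apply p_slot | apply p_bit | apply p_ball | apply p_bex
      | apply p_and | apply p_imp | apply p_pow | apply p_KK
      | apply p_BB | apply p_ty | apply p_fst | apply p_snd
  exact this.comp (f := fun a => ((f a, g a), (h a, k a))) ((hf.pair hg).pair (hh.pair hk))

end prim

/-! ### Arithmetic lemmas -/

theorem exists_digits (b : ℕ) (n : ℕ) : ∀ g : ℕ → ℕ, (∀ i, g i < b) →
    ∃ L < b ^ n, ∀ i < n, dig b L i = g i := by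
  induction n with
  | zero => intro g _; exact ⟨0, by simp, by simp⟩
  | succ n ih =>
    intro g hg
    obtain ⟨L, hL, h⟩ := ih (fun i => g (i + 1)) (fun i => hg _)
    have hb : 0 < b := (Nat.zero_le _).trans_lt (hg 0)
    refine ⟨g 0 + b * L, ?_, ?_⟩
    · rw [pow_succ]
      have h1 := hg 0
      have h2 : b * (L + 1) ≤ b * b ^ n := Nat.mul_le_mul_left b hL
      rw [mul_comm (b ^ n) b]
      linarith [mul_add b L 1]
    · rintro (_ | i) hi
      · simp [dig, Nat.mod_eq_of_lt (hg 0)]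
      · have := h i (by omega)
        unfold dig at this ⊢
        rw [pow_succ', ← Nat.div_div_eq_div_mul, Nat.add_mul_div_left _ _ hb,
          Nat.div_eq_of_lt (hg 0), zero_add, this]

theorem exists_bits (P : ℕ → Prop) (n : ℕ) : ∃ t < 2 ^ n, ∀ m < n, (bit t m ↔ P m) := by
  classical
  obtain ⟨t, ht, h⟩ := exists_digits 2 n (fun i => if P i then 1 else 0)
    (fun i => by split_ifs <;> omega)
  refine ⟨t, ht, fun m hm => ?_⟩
  unfold bit
  rw [h m hm]
  split_ifs with hp <;> simp [hp]

theorem not_bit_zero (m : ℕ) : ¬ bit 0 m := by simp [bit, dig]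

theorem pair_lt {a a' b b' : ℕ} (h1 : a ≤ a') (h2 : b < b') : Nat.pair a b < Nat.pair a' b' := by
  rcases h1.lt_or_eq with h | rfl
  · exact (Nat.pair_lt_pair_left b h).trans (Nat.pair_lt_pair_right a' h2)
  · exact Nat.pair_lt_pair_right a h2

theorem NN_ge {M c : ℕ} (hc : c < M) : c < NN M :=
  hc.trans_le (((Nat.left_le_pair M (Nat.pair M M))).trans (Nat.right_le_pair _ _))

theorem lt_NN2 {M k a b : ℕ} (hk : k ≤ 9) (ha : a < M) (hb : b < M) :
    Nat.pair k (Nat.pair a b) < NN M :=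
  pair_lt hk (pair_lt ha.le (hb.trans_le (Nat.left_le_pair _ _)))

theorem lt_NN3 {M k n a b : ℕ} (hk : k ≤ 9) (hn : n < M) (ha : a < M) (hb : b < M) :
    Nat.pair k (Nat.pair n (Nat.pair a b)) < NN M :=
  pair_lt hk (pair_lt hn.le (pair_lt ha.le hb))

theorem lt_NN1 {M k a : ℕ} (hk : k ≤ 9) (ha : a < M) : Nat.pair k a < NN M :=
  pair_lt hk (ha.trans_le (Nat.left_le_pair _ _))

/-! ### Lists -/

theorem tl_iter (l : List ℕ) (i : ℕ) : tl^[i] (natListCode l) = natListCode (l.drop i) := by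
  induction i generalizing l with
  | zero => simp
  | succ i ih =>
    rw [Function.iterate_succ_apply]
    cases l with
    | nil =>
      have : tl (natListCode []) = natListCode [] := by simp [tl, natListCode]
      rw [this, ih]; simp
    | cons a l =>
      have : tl (natListCode (a :: l)) = natListCode l := by simp [tl, natListCode]
      rw [this, ih]; simp

theorem length_le_code (l : List ℕ) : l.length ≤ natListCode l := by
  induction l with
  | nil => simp
  | cons a l ih =>
    have := Nat.right_le_pair a (natListCode l)
    simp only [List.length_cons, natListCode]; omega

theorem mem_lt_code {l : List ℕ} {x : ℕ} (h : x ∈ l) : x < natListCode l := by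
  induction l with
  | nil => simp at h
  | cons a l ih =>
    have h1 := Nat.right_le_pair a (natListCode l)
    have h2 := Nat.left_le_pair a (natListCode l)
    simp only [natListCode]
    rcases List.mem_cons.1 h with rfl | h
    · omega
    · have := ih h; omega

theorem Mem_code (l : List ℕ) (x : ℕ) : Mem (natListCode l) x ↔ x ∈ l := by
  unfold Mem
  simp only [tl_iter]
  constructor
  · rintro ⟨i, -, h0, h⟩
    cases hd : l.drop i with
    | nil => simp [hd, natListCode] at h0
    | cons a l' =>
      rw [hd] at h
      simp [natListCode] at h
      subst h
      exact List.mem_of_mem_drop (i := i) (by rw [hd]; simp)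
  · intro h
    obtain ⟨i, hi, rfl⟩ := List.getElem_of_mem h
    refine ⟨i, hi.trans_le (length_le_code l), ?_⟩
    rw [List.drop_eq_getElem_cons hi]
    simp [natListCode]

/-! ### Roles -/

def decR (n : ℕ) : Role := if n % 2 = 0 then .atom (n / 2) else .inv (n / 2)

theorem decR_code (R : Role) : decR R.code = R := by
  cases R with
  | atom n => simp [decR, Role.code]
  | inv n =>
    have : (2 * n + 1) / 2 = n := by omega
    have h2 : ¬ (2 * n + 1) % 2 = 0 := by omega
    simp only [decR, Role.code, this, if_neg h2]

theorem code_decR (n : ℕ) : (decR n).code = n := by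
  unfold decR
  split_ifs <;> simp only [Role.code] <;> omega

theorem code_inj {R S : Role} (h : R.code = S.code) : R = S := by
  rw [← decR_code R, h, decR_code]

theorem rinv_even (n : ℕ) : rinv (2 * n) = 2 * n + 1 := by
  unfold rinv; rw [if_pos (by omega)]

theorem rinv_odd (n : ℕ) : rinv (2 * n + 1) = 2 * n := by
  unfold rinv; rw [if_neg (by omega)]; omega

theorem rinv_code (R : Role) : rinv R.code = R.Inv.code := by
  cases R
  · exact rinv_even _
  · exact rinv_odd _

theorem rinv_lt {M r : ℕ} (hM : M % 2 = 0) (h : r < M) : rinv r < M := by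
  unfold rinv; split_ifs <;> omega

theorem rinv_rinv (r : ℕ) : rinv (rinv r) = r := by
  unfold rinv; split_ifs <;> omega

theorem Inv_Inv (R : Role) : R.Inv.Inv = R := by cases R <;> rfl

theorem decR_rinv (r : ℕ) : decR (rinv r) = (decR r).Inv := by
  apply code_inj
  rw [code_decR, ← rinv_code, code_decR]

theorem Inv_code_le (R : Role) : R.Inv.code ≤ R.code + 1 := by
  cases R <;> simp only [Role.code, Role.Inv] <;> omega

theorem TrR_code (R : Role) : TrR R.code ↔ RTrans evenRp R := by
  cases R <;> simp only [TrR, Role.code, RTrans, evenRp, Set.mem_ofPred_eq] <;> omega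

theorem TrR_decR (r : ℕ) : TrR r ↔ RTrans evenRp (decR r) := by
  rw [← TrR_code, code_decR]

theorem Mem_ria (RIA : List (Role × Role)) (R S : Role) :
    Mem (riaCode RIA) (Nat.pair R.code S.code) ↔ (R, S) ∈ RIA := by
  unfold riaCode
  rw [Mem_code, List.mem_map]
  constructor
  · rintro ⟨⟨A, B⟩, hm, h⟩
    obtain ⟨h1, h2⟩ := Nat.pair_eq_pair.1 h
    have := code_inj h1
    have := code_inj h2
    simp_all
  · intro h; exact ⟨_, h, rfl⟩

theorem ria_lt {RIA : List (Role × Role)} {R S : Role} (h : (R, S) ∈ RIA) :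
    R.code < riaCode RIA ∧ S.code < riaCode RIA := by
  have : Nat.pair R.code S.code < riaCode RIA :=
    mem_lt_code (List.mem_map.2 ⟨_, h, rfl⟩)
  exact ⟨(Nat.left_le_pair _ _).trans_lt this, (Nat.right_le_pair _ _).trans_lt this⟩

theorem Step_code (RIA : List (Role × Role)) (R S : Role) :
    Step (riaCode RIA) R.code S.code ↔ ((R, S) ∈ RIA ∨ (R.Inv, S.Inv) ∈ RIA) := by
  unfold Step
  rw [rinv_code, rinv_code, Mem_ria, Mem_ria]

theorem step_lt {RIA : List (Role × Role)} {M : ℕ} (hM : riaCode RIA < M) {R S : Role}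
    (h : (R, S) ∈ RIA ∨ (R.Inv, S.Inv) ∈ RIA) : R.code < M ∧ S.code < M := by
  rcases h with h | h
  · have := ria_lt h; omega
  · have := ria_lt h
    have h1 := Inv_code_le R.Inv
    have h2 := Inv_code_le S.Inv
    rw [Inv_Inv] at h1 h2
    omega

theorem SubRole_lt {RIA : List (Role × Role)} {M : ℕ} (hM : riaCode RIA < M) {R S : Role}
    (h : SubRole RIA R S) : R.code < M ↔ S.code < M := by
  induction h with
  | refl => rfl
  | tail _ h2 ih =>
    have := step_lt hM h2
    rw [ih]; simp [this]

theorem SubR_code {RIA : List (Role × Role)} {M : ℕ} (hM : riaCode RIA < M) {R S : Role}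
    (hR : R.code < M) (hS : S.code < M) :
    SubR M (riaCode RIA) R.code S.code ↔ SubRole RIA R S := by
  constructor
  · intro h
    obtain ⟨u, hu, hb⟩ := exists_bits (fun m => SubRole RIA R (decR m)) M
    have := h u hu ⟨?_, ?_⟩
    · rwa [hb _ hS, decR_code] at this
    · rw [hb _ hR, decR_code]; exact Relation.ReflTransGen.refl
    · rintro a ha b hb' ⟨hs, hua⟩
      rw [hb _ ha] at hua
      rw [hb _ hb']
      refine Relation.ReflTransGen.tail hua ?_
      rw [← code_decR a, ← code_decR b, Step_code] at hs
      exact hs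
  · rintro h u hu ⟨h1, h2⟩
    induction h with
    | refl => exact h1
    | tail _ hs ih =>
      obtain ⟨ha, hb⟩ := step_lt hM hs
      exact h2 _ ha _ hb ⟨(Step_code _ _ _).2 hs, ih ha⟩

theorem SubR_dec {RIA : List (Role × Role)} {M : ℕ} (hM : riaCode RIA < M) {r s : ℕ}
    (hr : r < M) (hs : s < M) :
    SubR M (riaCode RIA) r s ↔ SubRole RIA (decR r) (decR s) := by
  have := SubR_code hM (R := decR r) (S := decR s) (by rwa [code_decR]) (by rwa [code_decR])
  rwa [code_decR, code_decR] at this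

theorem SubRole_Inv {RIA : List (Role × Role)} {R S : Role} (h : SubRole RIA R S) :
    SubRole RIA R.Inv S.Inv := by
  induction h with
  | refl => exact Relation.ReflTransGen.refl
  | tail _ h2 ih =>
    refine Relation.ReflTransGen.tail ih ?_
    rw [Inv_Inv, Inv_Inv]
    exact h2.symm

theorem RTrans_Inv {R : Role} : RTrans evenRp R.Inv ↔ RTrans evenRp R := by
  cases R <;> rfl

/-! ### Decoding concepts -/

theorem unp_lt {n : ℕ} (h : ¬ n.unpair.1 = 0) : n.unpair.2 < n := by
  have := Nat.unpair_add_le n; omega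

def dec (n : ℕ) : DLConcept :=
  if h : n.unpair.1 = 0 then .top else
  match n.unpair.1 with
  | 1 => .bot
  | 2 => .atom n.unpair.2
  | 3 => .neg (dec n.unpair.2)
  | 4 => .and (dec n.unpair.2.unpair.1) (dec n.unpair.2.unpair.2)
  | 5 => .or (dec n.unpair.2.unpair.1) (dec n.unpair.2.unpair.2)
  | 6 => .all (decR n.unpair.2.unpair.1) (dec n.unpair.2.unpair.2)
  | 7 => .ex (decR n.unpair.2.unpair.1) (dec n.unpair.2.unpair.2)
  | 8 => .atleast n.unpair.2.unpair.1 (decR n.unpair.2.unpair.2.unpair.1)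
      (dec n.unpair.2.unpair.2.unpair.2)
  | 9 => .atmost n.unpair.2.unpair.1 (decR n.unpair.2.unpair.2.unpair.1)
      (dec n.unpair.2.unpair.2.unpair.2)
  | _ => .top
termination_by n
decreasing_by
  all_goals
    have h1 := unp_lt h
    have h2 := Nat.unpair_left_le n.unpair.2
    have h3 := Nat.unpair_right_le n.unpair.2
    have h4 := Nat.unpair_right_le n.unpair.2.unpair.2
    omega

theorem dec_top : dec (Nat.pair 0 0) = .top := by rw [dec]; simp
theorem dec_bot : dec (Nat.pair 1 0) = .bot := by rw [dec]; simp
theorem dec_atom (a : ℕ) : dec (Nat.pair 2 a) = .atom a := by rw [dec]; simp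
theorem dec_neg (c : ℕ) : dec (Nat.pair 3 c) = .neg (dec c) := by rw [dec]; simp
theorem dec_and (c d : ℕ) : dec (cAnd c d) = .and (dec c) (dec d) := by
  unfold cAnd; rw [dec]; simp
theorem dec_or (c d : ℕ) : dec (cOr c d) = .or (dec c) (dec d) := by
  unfold cOr; rw [dec]; simp
theorem dec_all (r c : ℕ) : dec (cAll r c) = .all (decR r) (dec c) := by
  unfold cAll; rw [dec]; simp
theorem dec_ex (r c : ℕ) : dec (cEx r c) = .ex (decR r) (dec c) := by
  unfold cEx; rw [dec]; simp
theorem dec_ge (n r c : ℕ) : dec (cGe n r c) = .atleast n (decR r) (dec c) := by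
  unfold cGe; rw [dec]; simp
theorem dec_le (n r c : ℕ) : dec (cLe n r c) = .atmost n (decR r) (dec c) := by
  unfold cLe; rw [dec]; simp

theorem dec_code (C : DLConcept) : dec C.code = C := by
  induction C with
  | top => exact dec_top
  | bot => exact dec_bot
  | atom a => exact dec_atom a
  | neg C ih => exact (dec_neg _).trans (by rw [ih])
  | and C D ih1 ih2 => exact (dec_and _ _).trans (by rw [ih1, ih2])
  | or C D ih1 ih2 => exact (dec_or _ _).trans (by rw [ih1, ih2])
  | all R C ih => exact (dec_all _ _).trans (by rw [ih, decR_code])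
  | ex R C ih => exact (dec_ex _ _).trans (by rw [ih, decR_code])
  | atleast n R C ih => exact (dec_ge _ _ _).trans (by rw [ih, decR_code])
  | atmost n R C ih => exact (dec_le _ _ _).trans (by rw [ih, decR_code])

theorem Mem_term (T : Terminology) (C D : DLConcept) :
    Mem (termCode T) (Nat.pair C.code D.code) ↔ (C, D) ∈ T := by
  unfold termCode
  rw [Mem_code, List.mem_map]
  constructor
  · rintro ⟨⟨A, B⟩, hm, h⟩
    obtain ⟨h1, h2⟩ := Nat.pair_eq_pair.1 h
    have h1 := congrArg dec h1
    have h2 := congrArg dec h2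
    simp only [dec_code] at h1 h2
    simp_all
  · intro h; exact ⟨_, h, rfl⟩

theorem Mem_term_dec {T : Terminology} {c d : ℕ} (h : Mem (termCode T) (Nat.pair c d)) :
    (dec c, dec d) ∈ T := by
  unfold termCode at h
  rw [Mem_code, List.mem_map] at h
  obtain ⟨⟨A, B⟩, hm, h⟩ := h
  obtain ⟨rfl, rfl⟩ := Nat.pair_eq_pair.1 h
  simpa [dec_code] using hm

theorem term_lt {T : Terminology} {C D : DLConcept} (h : (C, D) ∈ T) :
    C.code < termCode T ∧ D.code < termCode T := by
  have : Nat.pair C.code D.code < termCode T :=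
    mem_lt_code (List.mem_map.2 ⟨_, h, rfl⟩)
  exact ⟨(Nat.left_le_pair _ _).trans_lt this, (Nat.right_le_pair _ _).trans_lt this⟩

/-! ### Quasi-models -/

structure QM (RIA : List (Role × Role)) (T : Terminology) (M : ℕ) {D : Type}
    (base : Role → D → D → Prop) (tt : D → ℕ → Prop) : Prop where
  inv : ∀ {R x y}, base R x y → base R.Inv y x
  up : ∀ {R S x y}, base R x y → SubRole RIA R S → base S x y
  top : ∀ x, tt x (Nat.pair 0 0)
  bot : ∀ x, ¬ tt x (Nat.pair 1 0)
  neg : ∀ x c, c < M → (tt x (Nat.pair 3 c) ↔ ¬ tt x c)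
  and : ∀ x c d, c < M → d < M → (tt x (cAnd c d) ↔ tt x c ∧ tt x d)
  or : ∀ x c d, c < M → d < M → (tt x (cOr c d) ↔ tt x c ∨ tt x d)
  tbox : ∀ x C D, (C, D) ∈ T → tt x C.code → tt x D.code
  all1 : ∀ {R x y c}, base R x y → c < M → tt x (cAll R.code c) → tt y c
  ex1 : ∀ {R x y c}, base R x y → c < M → tt y c → tt x (cEx R.code c)
  all2 : ∀ {Q S x y c}, base Q x y → RTrans evenRp Q → SubRole RIA Q S → c < M →
    tt x (cAll S.code c) → tt y (cAll Q.code c)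
  ex2 : ∀ {Q S x y c}, base Q x y → RTrans evenRp Q → SubRole RIA Q S → c < M →
    tt y (cEx Q.code c) → tt x (cEx S.code c)
  wex : ∀ {R x c}, R.code < M → c < M → tt x (cEx R.code c) → ∃ y, base R x y ∧ tt y c
  wall : ∀ {R x c}, R.code < M → c < M → ¬ tt x (cAll R.code c) → ∃ y, base R x y ∧ ¬ tt y c
  ge : ∀ {R x n c}, n < M → R.code < M → c < M →
    (tt x (cGe n R.code c) ↔ (n : Cardinal) ≤ Cardinal.mk {y // base R x y ∧ tt y c})
  le : ∀ {R x n c}, n < M → R.code < M → c < M →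
    (tt x (cLe n R.code c) ↔ Cardinal.mk {y // base R x y ∧ tt y c} ≤ (n : Cardinal))

/-- Closure of the base edges under the required transitivities. -/
def FF (RIA : List (Role × Role)) {D : Type} (base : Role → D → D → Prop) (R : Role) (x y : D) :
    Prop :=
  base R x y ∨ ∃ Q, RTrans evenRp Q ∧ SubRole RIA Q R ∧ Relation.TransGen (base Q) x y

/-- The interpretation built from a quasi-model. -/
def mkI (RIA : List (Role × Role)) {D : Type} (x0 : D) (base : Role → D → D → Prop)
    (tt : D → ℕ → Prop) : Interp where
  Dom := D
  dom_nonempty := ⟨x0⟩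
  cI a := {x | tt x (Nat.pair 2 a)}
  rI r := FF RIA base (.atom r)

namespace QM

variable {RIA : List (Role × Role)} {T : Terminology} {M : ℕ} {D : Type}
  {base : Role → D → D → Prop} {tt : D → ℕ → Prop}

theorem tg_inv (q : QM RIA T M base tt) {Q : Role} {x y : D}
    (h : Relation.TransGen (base Q) x y) : Relation.TransGen (base Q.Inv) y x := by
  induction h with
  | single h => exact .single (q.inv h)
  | tail _ h ih => exact .head (q.inv h) ih

theorem FF_inv (q : QM RIA T M base tt) {R : Role} {x y : D} (h : FF RIA base R x y) :
    FF RIA base R.Inv y x := by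
  rcases h with h | ⟨Q, h1, h2, h3⟩
  · exact .inl (q.inv h)
  · exact .inr ⟨Q.Inv, RTrans_Inv.2 h1, SubRole_Inv h2, q.tg_inv h3⟩

theorem rSem_eq (q : QM RIA T M base tt) (x0 : D) (R : Role) (x y : D) :
    (mkI RIA x0 base tt).rSem R x y ↔ FF RIA base R x y := by
  cases R with
  | atom r => rfl
  | inv r => exact ⟨fun h => q.FF_inv h, fun h => q.FF_inv h⟩

theorem modelsRH (q : QM RIA T M base tt) (x0 : D) : (mkI RIA x0 base tt).ModelsRH RIA := by
  intro R S hRS x y h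
  refine (q.rSem_eq x0 S x y).2 ?_
  rcases (q.rSem_eq x0 R x y).1 h with h | ⟨Q, h1, h2, h3⟩
  · exact .inl (q.up h hRS)
  · exact .inr ⟨Q, h1, h2.trans hRS, h3⟩

theorem good (q : QM RIA T M base tt) (x0 : D) : (mkI RIA x0 base tt).Good evenRp := by
  intro r hr x y z h1 h2
  have key : ∀ {x y : D}, FF RIA base (.atom r) x y →
      Relation.TransGen (base (.atom r)) x y := by
    rintro x y (h | ⟨Q, _, h2, h3⟩)
    · exact .single h
    · induction h3 with
      | single h => exact .single (q.up h h2)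
      | tail _ h ih => exact .tail ih (q.up h h2)
  exact .inr ⟨.atom r, hr, Relation.ReflTransGen.refl, (key h1).trans (key h2)⟩

theorem FF_simple {R : Role} (hs : SimpleRole evenRp RIA R) (x y : D) :
    FF RIA base R x y ↔ base R x y := by
  constructor
  · rintro (h | ⟨Q, h1, h2, _⟩)
    · exact h
    · exact absurd h1 (hs Q h2)
  · exact .inl

theorem all_path (q : QM RIA T M base tt) {Q S : Role} {x y : D} {c : ℕ} (hc : c < M)
    (hT : RTrans evenRp Q) (hS : SubRole RIA Q S) (h : Relation.TransGen (base Q) x y)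
    (hx : tt x (cAll S.code c)) : tt y c ∧ tt y (cAll Q.code c) := by
  induction h with
  | single h => exact ⟨q.all1 (q.up h hS) hc hx, q.all2 h hT hS hc hx⟩
  | tail _ h ih =>
    exact ⟨q.all1 h hc ih.2, q.all2 h hT Relation.ReflTransGen.refl hc ih.2⟩

theorem ex_path (q : QM RIA T M base tt) {Q S : Role} {x y : D} {c : ℕ} (hc : c < M)
    (hT : RTrans evenRp Q) (hS : SubRole RIA Q S) (h : Relation.TransGen (base Q) x y)
    (hx : ¬ tt x (cEx S.code c)) : ¬ tt y c ∧ ¬ tt y (cEx Q.code c) := by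
  induction h with
  | single h =>
    exact ⟨fun h' => hx (q.ex1 (q.up h hS) hc h'), fun h' => hx (q.ex2 h hT hS hc h')⟩
  | tail _ h ih =>
    exact ⟨fun h' => ih.2 (q.ex1 h hc h'),
      fun h' => ih.2 (q.ex2 h hT Relation.ReflTransGen.refl hc h')⟩

theorem truth (q : QM RIA T M base tt) (x0 : D) (C : DLConcept) (hC : C.IsSHIQ evenRp RIA)
    (hM : C.code < M) (x : D) : x ∈ (mkI RIA x0 base tt).cSem C ↔ tt x C.code := by
  have pl : ∀ k a : ℕ, a ≤ Nat.pair k a := fun k a => Nat.right_le_pair k a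
  have pf : ∀ k a : ℕ, k ≤ Nat.pair k a := fun k a => Nat.left_le_pair k a
  induction C generalizing x with
  | top => exact ⟨fun _ => q.top x, fun _ => trivial⟩
  | bot => exact ⟨fun h => absurd h (Set.notMem_empty x), fun h => absurd h (q.bot x)⟩
  | atom a => rfl
  | neg C ih =>
    have hc : C.code < M := (pl _ _).trans_lt hM
    exact (not_congr (ih hC hc x)).trans (q.neg x _ hc).symm
  | and C D ih1 ih2 =>
    have hp := (pl _ _).trans_lt hM
    have hc : C.code < M := (pf _ _).trans_lt hp
    have hd : D.code < M := (pl _ _).trans_lt hp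
    exact (and_congr (ih1 hC.1 hc x) (ih2 hC.2 hd x)).trans (q.and x _ _ hc hd).symm
  | or C D ih1 ih2 =>
    have hp := (pl _ _).trans_lt hM
    have hc : C.code < M := (pf _ _).trans_lt hp
    have hd : D.code < M := (pl _ _).trans_lt hp
    exact (or_congr (ih1 hC.1 hc x) (ih2 hC.2 hd x)).trans (q.or x _ _ hc hd).symm
  | all R C ih =>
    have hp := (pl _ _).trans_lt hM
    have hr : R.code < M := (pf _ _).trans_lt hp
    have hc : C.code < M := (pl _ _).trans_lt hp
    change (∀ y, (mkI RIA x0 base tt).rSem R x y → y ∈ (mkI RIA x0 base tt).cSem C) ↔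
      tt x (cAll R.code C.code)
    constructor
    · intro h
      by_contra hn
      obtain ⟨y, hb, hy⟩ := q.wall hr hc hn
      exact hy ((ih hC hc y).1 (h y ((q.rSem_eq x0 R x y).2 (.inl hb))))
    · intro h y hy
      refine (ih hC hc y).2 ?_
      rcases (q.rSem_eq x0 R x y).1 hy with hb | ⟨Q, h1, h2, h3⟩
      · exact q.all1 hb hc h
      · exact (q.all_path hc h1 h2 h3 h).1
  | ex R C ih =>
    have hp := (pl _ _).trans_lt hM
    have hr : R.code < M := (pf _ _).trans_lt hp
    have hc : C.code < M := (pl _ _).trans_lt hp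
    change (∃ y, (mkI RIA x0 base tt).rSem R x y ∧ y ∈ (mkI RIA x0 base tt).cSem C) ↔
      tt x (cEx R.code C.code)
    constructor
    · rintro ⟨y, hy, h⟩
      replace h := (ih hC hc y).1 h
      by_contra hn
      rcases (q.rSem_eq x0 R x y).1 hy with hb | ⟨Q, h1, h2, h3⟩
      · exact hn (q.ex1 hb hc h)
      · exact (q.ex_path hc h1 h2 h3 hn).1 h
    · intro h
      obtain ⟨y, hb, hy⟩ := q.wex hr hc h
      exact ⟨y, (q.rSem_eq x0 R x y).2 (.inl hb), (ih hC hc y).2 hy⟩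
  | atleast n R C ih =>
    have hp := (pl _ _).trans_lt hM
    have hn : n < M := (pf _ _).trans_lt hp
    have hp := (pl _ _).trans_lt hp
    have hr : R.code < M := (pf _ _).trans_lt hp
    have hc : C.code < M := (pl _ _).trans_lt hp
    change (n : Cardinal) ≤ Cardinal.mk {y // (mkI RIA x0 base tt).rSem R x y ∧
      y ∈ (mkI RIA x0 base tt).cSem C} ↔ tt x (cGe n R.code C.code)
    have e : Cardinal.mk {y // (mkI RIA x0 base tt).rSem R x y ∧
        y ∈ (mkI RIA x0 base tt).cSem C} = Cardinal.mk {y // base R x y ∧ tt y C.code} :=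
      Cardinal.mk_congr (Equiv.subtypeEquivRight fun y =>
        and_congr ((q.rSem_eq x0 R x y).trans (FF_simple hC.1 x y)) (ih hC.2 hc y))
    exact (iff_of_eq (congrArg (fun k => (n : Cardinal) ≤ k) e)).trans (q.ge hn hr hc).symm
  | atmost n R C ih =>
    have hp := (pl _ _).trans_lt hM
    have hn : n < M := (pf _ _).trans_lt hp
    have hp := (pl _ _).trans_lt hp
    have hr : R.code < M := (pf _ _).trans_lt hp
    have hc : C.code < M := (pl _ _).trans_lt hp
    change Cardinal.mk {y // (mkI RIA x0 base tt).rSem R x y ∧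
      y ∈ (mkI RIA x0 base tt).cSem C} ≤ (n : Cardinal) ↔ tt x (cLe n R.code C.code)
    have e : Cardinal.mk {y // (mkI RIA x0 base tt).rSem R x y ∧
        y ∈ (mkI RIA x0 base tt).cSem C} = Cardinal.mk {y // base R x y ∧ tt y C.code} :=
      Cardinal.mk_congr (Equiv.subtypeEquivRight fun y =>
        and_congr ((q.rSem_eq x0 R x y).trans (FF_simple hC.1 x y)) (ih hC.2 hc y))
    exact (iff_of_eq (congrArg (fun k => k ≤ (n : Cardinal)) e)).trans (q.le hn hr hc).symm

theorem sat (q : QM RIA T M base tt) (hT : ∀ p ∈ T, p.1.IsSHIQ evenRp RIA ∧ p.2.IsSHIQ evenRp RIA)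
    (hTM : termCode T < M) (C : DLConcept) (hC : C.IsSHIQ evenRp RIA) (hM : C.code < M) (x0 : D)
    (hx : tt x0 C.code) : SatisfiableT evenRp RIA T C := by
  refine ⟨mkI RIA x0 base tt, q.good x0, q.modelsRH x0, ?_, x0, (q.truth x0 C hC hM x0).2 hx⟩
  rintro ⟨A, B⟩ hp x hxA
  have hl := term_lt hp
  have h1 := (q.truth x0 A (hT _ hp).1 (hl.1.trans hTM) x).1 hxA
  exact (q.truth x0 B (hT _ hp).2 (hl.2.trans hTM) x).2 (q.tbox x A B hp h1)

end QM

/-! ### From a witness to a quasi-model -/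

section build

variable (M σ0 : ℕ) (next : ℕ → ℕ → ℕ × ℕ)

open Classical in
/-- the star and the back index attached to a node of the tree -/
noncomputable def st : List ℕ → ℕ × ℕ
  | [] => (σ0, BB M)
  | i :: l =>
    if (i < BB M ∧ slot M (st l).1 i) ∧ i ≠ (st l).2 then next (st l).1 i else (σ0, BB M)

def edge (x : List ℕ) (i : ℕ) : Prop := i < BB M ∧ slot M (st M σ0 next x).1 i

noncomputable def nb (x : List ℕ) (i : ℕ) : List ℕ :=
  if i = (st M σ0 next x).2 then x.tail else i :: x

theorem nb_inj (x : List ℕ) {i j : ℕ} (h : nb M σ0 next x i = nb M σ0 next x j) : i = j := by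
  unfold nb at h
  have hl : ∀ k, x.tail ≠ k :: x := by
    intro k hk
    have := congrArg List.length hk
    simp at this
  split_ifs at h with h1 h2 h2
  · rw [h1, h2]
  · exact absurd h (hl _)
  · exact absurd h.symm (hl _)
  · exact (List.cons.inj h).1

theorem st_S (S : ℕ → Prop) (hS0 : S σ0)
    (hnext : ∀ σ i, S σ → i < BB M → slot M σ i →
      S (next σ i).1 ∧ (next σ i).2 < BB M ∧ Match M σ i (next σ i).1 (next σ i).2)
    (x : List ℕ) : S (st M σ0 next x).1 := by
  induction x with
  | nil => exact hS0
  | cons i l ih =>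
    unfold st
    split_ifs with h
    · exact (hnext _ _ ih h.1.1 h.1.2).1
    · exact hS0

theorem edge_back (S : ℕ → Prop) (hS0 : S σ0)
    (hnext : ∀ σ i, S σ → i < BB M → slot M σ i →
      S (next σ i).1 ∧ (next σ i).2 < BB M ∧ Match M σ i (next σ i).1 (next σ i).2)
    (hM2 : M % 2 = 0) (x : List ℕ) (i : ℕ) (h : edge M σ0 next x i) :
    ∃ j, edge M σ0 next (nb M σ0 next x i) j ∧
      nb M σ0 next (nb M σ0 next x i) j = x ∧
      ty (st M σ0 next (nb M σ0 next x i)).1 = nt M (st M σ0 next x).1 i ∧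
      ∀ r < M, (bit (ne M (st M σ0 next (nb M σ0 next x i)).1 j) r ↔
        bit (ne M (st M σ0 next x).1 i) (rinv r)) := by
  by_cases hi : i = (st M σ0 next x).2
  · have hnb : nb M σ0 next x i = x.tail := by unfold nb; rw [if_pos hi]
    rw [hnb]
    cases x with
    | nil => exact absurd hi (by have := h.1; simp only [st]; omega)
    | cons k l =>
      rw [List.tail_cons]
      by_cases hv : (k < BB M ∧ slot M (st M σ0 next l).1 k) ∧ k ≠ (st M σ0 next l).2
      · have hst : st M σ0 next (k :: l) = next (st M σ0 next l).1 k := by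
          rw [st, if_pos hv]
        obtain ⟨-, -, m1, m2, m3, m4⟩ :=
          hnext _ _ (st_S M σ0 next S hS0 hnext l) hv.1.1 hv.1.2
        rw [← hst] at m1 m2 m3 m4
        rw [← hi] at m2 m3 m4
        refine ⟨k, hv.1, ?_, m2.symm, ?_⟩
        · unfold nb; rw [if_neg hv.2]
        · intro r hr
          rw [m4 _ (rinv_lt hM2 hr), rinv_rinv]
      · exfalso
        have hst : st M σ0 next (k :: l) = (σ0, BB M) := by rw [st, if_neg hv]
        rw [hst] at hi
        have := h.1
        simp only at hi
        omega
  · have hnb : nb M σ0 next x i = i :: x := by unfold nb; rw [if_neg hi]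
    rw [hnb]
    have hst : st M σ0 next (i :: x) = next (st M σ0 next x).1 i := by
      rw [st, if_pos ⟨h, hi⟩]
    obtain ⟨-, mj, m1, m2, m3, m4⟩ := hnext _ _ (st_S M σ0 next S hS0 hnext x) h.1 h.2
    rw [← hst] at m1 m2 m3 m4 mj
    refine ⟨(st M σ0 next (i :: x)).2, ⟨mj, m3⟩, ?_, m1, m4⟩
    unfold nb; rw [if_pos rfl, List.tail_cons]

def tbase (R : Role) (x y : List ℕ) : Prop :=
  R.code < M ∧ ∃ i, edge M σ0 next x i ∧ nb M σ0 next x i = y ∧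
    bit (ne M (st M σ0 next x).1 i) R.code

def ttt (x : List ℕ) (m : ℕ) : Prop := bit (ty (st M σ0 next x).1) m

theorem build_qm (S : ℕ → Prop) (hS0 : S σ0)
    (hnext : ∀ σ i, S σ → i < BB M → slot M σ i →
      S (next σ i).1 ∧ (next σ i).2 < BB M ∧ Match M σ i (next σ i).1 (next σ i).2)
    (hM2 : M % 2 = 0) {RIA : List (Role × Role)} {T : Terminology}
    (hR : riaCode RIA < M) (hT : termCode T < M)
    (hloc : ∀ σ, S σ → LocBool M (termCode T) σ ∧ LocProp M (riaCode RIA) σ ∧ LocWit M σ) :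
    QM RIA T M (tbase M σ0 next) (ttt M σ0 next) := by
  have hs := st_S M σ0 next S hS0 hnext
  have eb := edge_back M σ0 next S hS0 hnext hM2
  -- the type of the target of an edge
  have tb : ∀ {x i}, edge M σ0 next x i → ∀ m, (ttt M σ0 next (nb M σ0 next x i) m ↔
      bit (nt M (st M σ0 next x).1 i) m) := by
    intro x i h m
    obtain ⟨j, -, -, h3, -⟩ := eb x i h
    unfold ttt
    rw [h3]
  have cardEq : ∀ {R : Role} {x : List ℕ} {c : ℕ}, R.code < M →
      Cardinal.mk {y // tbase M σ0 next R x y ∧ ttt M σ0 next y c} =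
        (cnt M (st M σ0 next x).1 R.code c : ℕ) := by
    intro R x c hRM
    classical
    unfold cnt
    rw [Nat.count_eq_card_filter_range, ← Cardinal.mk_coe_finset]
    symm
    refine Cardinal.mk_congr (Equiv.ofBijective (fun i => ⟨nb M σ0 next x i.1, ?_⟩) ⟨?_, ?_⟩)
    · obtain ⟨i, hi⟩ := i
      rw [Finset.mem_filter, Finset.mem_range] at hi
      have he : edge M σ0 next x i := ⟨hi.1, _, hRM, hi.2.1⟩
      exact ⟨⟨hRM, i, he, rfl, hi.2.1⟩, (tb he c).2 hi.2.2⟩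
    · intro i j hij
      exact Subtype.ext (nb_inj M σ0 next x (congrArg Subtype.val hij))
    · rintro ⟨y, ⟨-, i, he, rfl, hb⟩, hc⟩
      refine ⟨⟨i, ?_⟩, rfl⟩
      rw [Finset.mem_filter, Finset.mem_range]
      exact ⟨he.1, hb, (tb he c).1 hc⟩
  constructor
  case inv =>
    rintro R x y ⟨h1, i, he, rfl, hb⟩
    have hlt : R.Inv.code < M := by rw [← rinv_code]; exact rinv_lt hM2 h1
    obtain ⟨j, e, hj, -, h4⟩ := eb x i he
    refine ⟨hlt, j, e, hj, ?_⟩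
    rw [h4 _ hlt, rinv_code, Inv_Inv]
    exact hb
  case up =>
    rintro R S' x y ⟨h1, i, he, rfl, hb⟩ hsub
    have h2 := (SubRole_lt hR hsub).1 h1
    exact ⟨h2, i, he, rfl, (hloc _ (hs x)).2.1.1 i he.1 _ h1 _ h2 ⟨hb, (SubR_code hR h1 h2).2 hsub⟩⟩
  case top => intro x; exact (hloc _ (hs x)).1.1.1
  case bot => intro x; exact (hloc _ (hs x)).1.1.2
  case neg => intro x c hc; exact (hloc _ (hs x)).1.2.1 c hc
  case and => intro x c d hc hd; exact (hloc _ (hs x)).1.2.2.1 c hc d hd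
  case or => intro x c d hc hd; exact (hloc _ (hs x)).1.2.2.2.1 c hc d hd
  case tbox =>
    intro x C D hCD h
    have hl := term_lt hCD
    exact (hloc _ (hs x)).1.2.2.2.2 _ (hl.1.trans hT) _ (hl.2.trans hT)
      ⟨(Mem_term T C D).2 hCD, h⟩
  case all1 =>
    rintro R x y c ⟨h1, i, he, rfl, hb⟩ hc h
    exact (tb he _).2 (((hloc _ (hs x)).2.1.2.1 i he.1 _ h1 c hc hb).1 h)
  case ex1 =>
    rintro R x y c ⟨h1, i, he, rfl, hb⟩ hc h
    exact ((hloc _ (hs x)).2.1.2.1 i he.1 _ h1 c hc hb).2 ((tb he _).1 h)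
  case all2 =>
    rintro Q S' x y c ⟨h1, i, he, rfl, hb⟩ htr hsub hc h
    have h2 := (SubRole_lt hR hsub).1 h1
    exact (tb he _).2 (((hloc _ (hs x)).2.1.2.2 i he.1 _ h1 _ h2 c hc
      ⟨hb, (TrR_code Q).2 htr, (SubR_code hR h1 h2).2 hsub⟩).1 h)
  case ex2 =>
    rintro Q S' x y c ⟨h1, i, he, rfl, hb⟩ htr hsub hc h
    have h2 := (SubRole_lt hR hsub).1 h1
    exact ((hloc _ (hs x)).2.1.2.2 i he.1 _ h1 _ h2 c hc
      ⟨hb, (TrR_code Q).2 htr, (SubR_code hR h1 h2).2 hsub⟩).2 ((tb he _).1 h)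
  case wex =>
    intro R x c h1 hc h
    obtain ⟨i, hi, h2, h3⟩ := (hloc _ (hs x)).2.2.1 _ h1 c hc h
    have he : edge M σ0 next x i := ⟨hi, _, h1, h2⟩
    exact ⟨_, ⟨h1, i, he, rfl, h2⟩, (tb he _).2 h3⟩
  case wall =>
    intro R x c h1 hc h
    obtain ⟨i, hi, h2, h3⟩ := (hloc _ (hs x)).2.2.2.1 _ h1 c hc h
    have he : edge M σ0 next x i := ⟨hi, _, h1, h2⟩
    exact ⟨_, ⟨h1, i, he, rfl, h2⟩, fun h' => h3 ((tb he _).1 h')⟩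
  case ge =>
    intro R x n c hn h1 hc
    rw [cardEq h1, Nat.cast_le]
    exact (hloc _ (hs x)).2.2.2.2.1 n hn _ h1 c hc
  case le =>
    intro R x n c hn h1 hc
    rw [cardEq h1, Nat.cast_le]
    exact (hloc _ (hs x)).2.2.2.2.2 n hn _ h1 c hc

end build

theorem sat_of_SatCode {M : ℕ} (hM2 : M % 2 = 0) {RIA : List (Role × Role)} {T : Terminology}
    (hR : riaCode RIA < M) (hT : termCode T < M)
    (hTs : ∀ p ∈ T, p.1.IsSHIQ evenRp RIA ∧ p.2.IsSHIQ evenRp RIA)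
    (C : DLConcept) (hC : C.IsSHIQ evenRp RIA) (hCM : C.code < M)
    (h : SatCode M C.code (termCode T) (riaCode RIA)) : SatisfiableT evenRp RIA T C := by
  obtain ⟨w, -, ⟨σ0, h0, hw0, hc0⟩, hall⟩ := h
  let S : ℕ → Prop := fun σ => σ < KK M ∧ bit w σ
  have hex : ∀ σ i, ∃ p : ℕ × ℕ, S σ → i < BB M → slot M σ i →
      S p.1 ∧ p.2 < BB M ∧ Match M σ i p.1 p.2 := by
    intro σ i
    by_cases hc : S σ ∧ i < BB M ∧ slot M σ i
    · obtain ⟨h1, h2, h3⟩ := hc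
      obtain ⟨τ, ht, hwt, j, hj, hm⟩ := (hall σ h1.1 h1.2).2 i h2 h3
      exact ⟨(τ, j), fun _ _ _ => ⟨⟨ht, hwt⟩, hj, hm⟩⟩
    · exact ⟨(0, 0), fun a b c => absurd ⟨a, b, c⟩ hc⟩
  choose next hnext using hex
  have q := build_qm M σ0 next S ⟨h0, hw0⟩ hnext hM2 hR hT (fun σ hσ => (hall σ hσ.1 hσ.2).1)
  exact q.sat hTs hT C hC hCM [] hc0

/-! ### From a model to a witness -/

theorem exists_sub {α : Type} (A : Set α) (k : ℕ) : ∃ F : Finset α, (∀ y ∈ F, y ∈ A) ∧ F.card ≤ k ∧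
    ∀ n ≤ k, (n : Cardinal) ≤ Cardinal.mk A → n ≤ F.card := by
  by_cases hA : A.Finite
  · obtain ⟨F, hF, hc⟩ := Finset.exists_subset_card_eq (s := hA.toFinset)
      (n := min k hA.toFinset.card) (min_le_right _ _)
    refine ⟨F, fun y hy => hA.mem_toFinset.1 (hF hy), by omega, fun n hn h => ?_⟩
    have : Cardinal.mk A = (hA.toFinset.card : ℕ) := by
      rw [← Cardinal.mk_coe_finset]
      exact Cardinal.mk_congr (Equiv.subtypeEquivRight fun y => hA.mem_toFinset.symm)
    rw [this, Nat.cast_le] at h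
    omega
  · obtain ⟨F, hF, hc⟩ := Set.Infinite.exists_subset_card_eq hA k
    exact ⟨F, fun y hy => hF hy, hc.le, fun n hn _ => by omega⟩

section sound

variable (I : Interp) (M : ℕ)

noncomputable def tyN (x : I.Dom) : ℕ :=
  (exists_bits (fun m => x ∈ I.cSem (dec m)) (NN M)).choose

theorem tyN_lt (x : I.Dom) : tyN I M x < 2 ^ NN M :=
  (exists_bits (fun m => x ∈ I.cSem (dec m)) (NN M)).choose_spec.1

theorem tyN_bit (x : I.Dom) {m : ℕ} (h : m < NN M) : bit (tyN I M x) m ↔ x ∈ I.cSem (dec m) :=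
  (exists_bits (fun m => x ∈ I.cSem (dec m)) (NN M)).choose_spec.2 m h

noncomputable def eN (x y : I.Dom) : ℕ :=
  (exists_bits (fun r => I.rSem (decR r) x y) M).choose

theorem eN_lt (x y : I.Dom) : eN I M x y < 2 ^ M :=
  (exists_bits (fun r => I.rSem (decR r) x y) M).choose_spec.1

theorem eN_bit (x y : I.Dom) {r : ℕ} (h : r < M) : bit (eN I M x y) r ↔ I.rSem (decR r) x y :=
  (exists_bits (fun r => I.rSem (decR r) x y) M).choose_spec.2 r h

def sel (x : I.Dom) (r c : ℕ) (b : Bool) : Set I.Dom :=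
  {y | I.rSem (decR r) x y ∧ (y ∈ I.cSem (dec c) ↔ b = true)}

theorem exists_W (x : I.Dom) : ∃ W : Finset I.Dom, W.card ≤ 2 * M * M * M ∧
    ∀ r < M, ∀ c < M, ∀ b, ∃ F ⊆ W, (∀ y ∈ F, y ∈ sel I x r c b) ∧
      ∀ n ≤ M, (n : Cardinal) ≤ Cardinal.mk (sel I x r c b) → n ≤ F.card := by
  classical
  choose F h1 h2 h3 using fun p : (ℕ × ℕ) × Bool => exists_sub (sel I x p.1.1 p.1.2 p.2) M
  let J := (Finset.range M ×ˢ Finset.range M) ×ˢ (Finset.univ : Finset Bool)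
  refine ⟨J.biUnion F, ?_, ?_⟩
  · have := Finset.card_biUnion_le_card_mul J F M (fun p _ => h2 p)
    have hJ : J.card = M * M * 2 := by simp [J]
    rw [hJ] at this
    linarith
  · intro r hr c hc b
    refine ⟨F ((r, c), b), ?_, h1 ((r, c), b), h3 ((r, c), b)⟩
    apply Finset.subset_biUnion_of_mem F
    simp [J, hr, hc]

noncomputable def WW (x : I.Dom) : Finset I.Dom := (exists_W I M x).choose

open Classical in
/-- selected neighbours of `x`, together with `p` -/
noncomputable def WP (x p : I.Dom) : Finset I.Dom := insert p (WW I M x)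

theorem WP_card (x p : I.Dom) : (WP I M x p).card ≤ BB M := by
  classical
  have h1 := (exists_W I M x).choose_spec.1
  have h2 := Finset.card_insert_le p (WW I M x)
  unfold WP BB
  unfold WW at *
  convert h2.trans (Nat.add_le_add_right h1 1)

/-- `σ` codes the star of `x` with the extra neighbour `p` -/
def Rep (σ : ℕ) (x p : I.Dom) : Prop :=
  σ < KK M ∧ ty σ = tyN I M x ∧
  ∃ l : List I.Dom, l.Nodup ∧ (∀ y, y ∈ l ↔ y ∈ WP I M x p) ∧ l.length ≤ BB M ∧
    (∀ i (h : i < l.length), ne M σ i = eN I M x l[i] ∧ nt M σ i = tyN I M l[i]) ∧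
    (∀ i < BB M, l.length ≤ i → ne M σ i = 0)

theorem exists_Rep (x p : I.Dom) : ∃ σ, Rep I M σ x p := by
  let l := (WP I M x p).toList
  have hlen : l.length ≤ BB M := by
    rw [Finset.length_toList]; exact WP_card I M x p
  let g : ℕ → ℕ := fun i =>
    if h : i < l.length then Nat.pair (eN I M x l[i]) (tyN I M l[i]) else Nat.pair 0 0
  obtain ⟨L, hL, hd⟩ := exists_digits (DD M) (BB M) g (by
    intro i
    simp only [g]
    split_ifs with h
    · exact pair_lt (eN_lt I M _ _).le (tyN_lt I M _)
    · exact pair_lt (Nat.zero_le _) (by positivity))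
  refine ⟨Nat.pair (tyN I M x) L, pair_lt (tyN_lt I M x).le hL, by simp [ty], l,
    Finset.nodup_toList _, fun y => Finset.mem_toList, hlen, ?_, ?_⟩
  · intro i h
    unfold ne nt
    rw [Nat.unpair_pair, hd i (h.trans_le hlen)]
    simp only [g, dif_pos h, Nat.unpair_pair, and_self]
  · intro i hi h
    unfold ne
    rw [Nat.unpair_pair, hd i hi]
    simp only [g, dif_neg (not_lt.2 h), Nat.unpair_pair]

variable {I M}

/-- slots with a role come from actual elements -/
theorem Rep.slot_elt {σ : ℕ} {x p : I.Dom} (h : Rep I M σ x p) {i r : ℕ} (hi : i < BB M)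
    (hb : bit (ne M σ i) r) : ∃ y ∈ WP I M x p, ne M σ i = eN I M x y ∧ nt M σ i = tyN I M y := by
  obtain ⟨-, -, l, -, hm, -, h1, h2⟩ := h
  by_cases hl : i < l.length
  · exact ⟨l[i], (hm _).1 (List.getElem_mem hl), h1 i hl⟩
  · rw [h2 i hi (not_lt.1 hl)] at hb
    exact absurd hb (not_bit_zero r)

theorem Rep.elt_slot {σ : ℕ} {x p : I.Dom} (h : Rep I M σ x p) {y : I.Dom}
    (hy : y ∈ WP I M x p) : ∃ i < BB M, ne M σ i = eN I M x y ∧ nt M σ i = tyN I M y := by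
  obtain ⟨-, -, l, -, hm, hlen, h1, h2⟩ := h
  obtain ⟨i, hi, rfl⟩ := List.getElem_of_mem ((hm y).2 hy)
  exact ⟨i, hi.trans_le hlen, h1 i hi⟩

open Classical in
theorem Rep.cnt_eq {σ : ℕ} {x p : I.Dom} (h : Rep I M σ x p) {r c : ℕ} (hr : r < M) (hc : c < M) :
    cnt M σ r c =
      ((WP I M x p).filter fun y => I.rSem (decR r) x y ∧ y ∈ I.cSem (dec c)).card := by
  have hs := @Rep.slot_elt I M σ x p h
  obtain ⟨-, -, l, hnd, hm, hlen, h1, h2⟩ := h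
  unfold cnt
  rw [Nat.count_eq_card_filter_range]
  have key : ∀ i ∈ (Finset.range (BB M)).filter
      (fun i => bit (ne M σ i) r ∧ bit (nt M σ i) c), i < l.length := by
    intro i hi
    rw [Finset.mem_filter, Finset.mem_range] at hi
    by_contra hn
    have := hi.2.1
    rw [h2 i hi.1 (not_lt.1 hn)] at this
    exact not_bit_zero r this
  refine Finset.card_bij (fun i hi => l[i]'(key i hi)) ?_ ?_ ?_
  · intro i hi
    have hl := key i hi
    rw [Finset.mem_filter] at hi ⊢
    obtain ⟨-, ha, hb⟩ := hi
    rw [(h1 i hl).1, eN_bit I M _ _ hr] at ha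
    rw [(h1 i hl).2, tyN_bit I M _ (NN_ge hc)] at hb
    exact ⟨(hm _).1 (List.getElem_mem hl), ha, hb⟩
  · intro i hi j hj hij
    exact (hnd.getElem_inj_iff).1 hij
  · intro y hy
    rw [Finset.mem_filter] at hy
    obtain ⟨i, hi, rfl⟩ := List.getElem_of_mem ((hm y).2 hy.1)
    refine ⟨i, ?_, rfl⟩
    rw [Finset.mem_filter, Finset.mem_range, (h1 i hi).1, (h1 i hi).2, eN_bit I M _ _ hr,
      tyN_bit I M _ (NN_ge hc)]
    exact ⟨hi.trans_le hlen, hy.2⟩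

theorem Rep.le_cnt {σ : ℕ} {x p : I.Dom} (h : Rep I M σ x p) {r c n : ℕ} (hr : r < M) (hc : c < M)
    (hn : n ≤ M) : n ≤ cnt M σ r c ↔
      (n : Cardinal) ≤ Cardinal.mk {y // I.rSem (decR r) x y ∧ y ∈ I.cSem (dec c)} := by
  classical
  rw [h.cnt_eq hr hc]
  constructor
  · intro hle
    refine (Nat.cast_le.2 hle).trans ?_
    rw [← Cardinal.mk_coe_finset]
    refine Cardinal.mk_le_of_injective (f := fun y => ⟨y.1, (Finset.mem_filter.1 y.2).2⟩) ?_
    intro a b hab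
    exact Subtype.ext (Subtype.mk.inj hab)
  · intro hle
    obtain ⟨F, hF, h1, h2⟩ := (exists_W I M x).choose_spec.2 r hr c hc true
    have e : Cardinal.mk (sel I x r c true) =
        Cardinal.mk {y // I.rSem (decR r) x y ∧ y ∈ I.cSem (dec c)} :=
      Cardinal.mk_congr (Equiv.subtypeEquivRight fun y => by simp [sel])
    refine (h2 n hn (hle.trans_eq e.symm)).trans (Finset.card_le_card fun y hy => ?_)
    have hy' := h1 y hy
    simp only [sel, Set.mem_ofPred_eq, iff_true] at hy'
    exact Finset.mem_filter.2 ⟨Finset.mem_insert_of_mem (hF hy), hy'⟩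

/-- every kind of witness is available among the selected neighbours -/
theorem exists_WP {x p : I.Dom} {r c : ℕ} (hr : r < M) (hc : c < M) (b : Bool) {y : I.Dom}
    (hy : y ∈ sel I x r c b) : ∃ z ∈ WP I M x p, z ∈ sel I x r c b := by
  classical
  obtain ⟨F, hF, h1, h2⟩ := (exists_W I M x).choose_spec.2 r hr c hc b
  have : 1 ≤ F.card := by
    refine h2 1 (by omega) ?_
    rw [Nat.cast_one, Cardinal.one_le_iff_ne_zero, Cardinal.mk_ne_zero_iff]
    exact ⟨⟨y, hy⟩⟩
  obtain ⟨z, hz⟩ := Finset.card_pos.1 this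
  exact ⟨z, Finset.mem_insert_of_mem (hF hz), h1 z hz⟩

theorem rSem_Inv (R : Role) (x y : I.Dom) : I.rSem R.Inv x y ↔ I.rSem R y x := by
  cases R <;> rfl

theorem rSem_trans (hG : I.Good evenRp) {Q : Role} (hQ : RTrans evenRp Q) {x y z : I.Dom}
    (h1 : I.rSem Q x y) (h2 : I.rSem Q y z) : I.rSem Q x z := by
  cases Q with
  | atom r => exact hG r hQ h1 h2
  | inv r => exact hG r hQ h2 h1

theorem Rep.locBool {σ : ℕ} {x p : I.Dom} (h : Rep I M σ x p) {T : Terminology}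
    (hM : 0 < M) (hT : I.ModelsT T) : LocBool M (termCode T) σ := by
  have hb : ∀ m < NN M, (bit (ty σ) m ↔ x ∈ I.cSem (dec m)) := by
    intro m hm; rw [h.2.1]; exact tyN_bit I M x hm
  refine ⟨⟨?_, ?_⟩, ?_, ?_, ?_, ?_⟩
  · rw [hb _ (lt_NN1 (by omega) hM), dec_top]; trivial
  · rw [hb _ (lt_NN1 (by omega) hM), dec_bot]; exact Set.notMem_empty x
  · intro c hc
    rw [hb _ (lt_NN1 (by omega) hc), hb _ (NN_ge hc), dec_neg]; rfl
  · intro c hc d hd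
    rw [hb (cAnd c d) (lt_NN2 (by omega) hc hd), hb _ (NN_ge hc), hb _ (NN_ge hd), dec_and]; rfl
  · intro c hc d hd
    rw [hb (cOr c d) (lt_NN2 (by omega) hc hd), hb _ (NN_ge hc), hb _ (NN_ge hd), dec_or]; rfl
  · intro c hc d hd
    rw [hb _ (NN_ge hc), hb _ (NN_ge hd)]
    rintro ⟨h1, h2⟩
    exact hT _ (Mem_term_dec h1) h2

theorem Rep.locProp {σ : ℕ} {x p : I.Dom} (h : Rep I M σ x p) {RIA : List (Role × Role)}
    (hR : riaCode RIA < M) (hG : I.Good evenRp) (hH : I.ModelsRH RIA) :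
    LocProp M (riaCode RIA) σ := by
  have hb : ∀ m < NN M, (bit (ty σ) m ↔ x ∈ I.cSem (dec m)) := by
    intro m hm; rw [h.2.1]; exact tyN_bit I M x hm
  refine ⟨?_, ?_, ?_⟩
  · rintro i hi r hr s hs ⟨h1, h2⟩
    obtain ⟨y, -, he, -⟩ := h.slot_elt hi h1
    rw [he, eN_bit I M _ _ hr] at h1
    rw [he, eN_bit I M _ _ hs]
    exact hH _ _ ((SubR_dec hR hr hs).1 h2) _ _ h1
  · intro i hi r hr c hc h1
    obtain ⟨y, -, he, ht⟩ := h.slot_elt hi h1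
    rw [he, eN_bit I M _ _ hr] at h1
    rw [ht, tyN_bit I M _ (NN_ge hc), hb (cAll r c) (lt_NN2 (by omega) hr hc),
      hb (cEx r c) (lt_NN2 (by omega) hr hc), dec_all, dec_ex]
    exact ⟨fun h' => h' y h1, fun h' => ⟨y, h1, h'⟩⟩
  · rintro i hi q hq s hs c hc ⟨h1, h2, h3⟩
    obtain ⟨y, -, he, ht⟩ := h.slot_elt hi h1
    rw [he, eN_bit I M _ _ hq] at h1
    rw [TrR_decR] at h2
    rw [SubR_dec hR hq hs] at h3
    rw [ht, tyN_bit I M _ (m := cAll q c) (lt_NN2 (by omega) hq hc),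
      tyN_bit I M _ (m := cEx q c) (lt_NN2 (by omega) hq hc),
      hb (cAll s c) (lt_NN2 (by omega) hs hc),
      hb (cEx s c) (lt_NN2 (by omega) hs hc), dec_all, dec_ex, dec_all, dec_ex]
    refine ⟨fun h' z hz => h' z (hH _ _ h3 _ _ (rSem_trans hG h2 h1 hz)), ?_⟩
    rintro ⟨z, hz, hzc⟩
    exact ⟨z, hH _ _ h3 _ _ (rSem_trans hG h2 h1 hz), hzc⟩

theorem Rep.locWit {σ : ℕ} {x p : I.Dom} (h : Rep I M σ x p) : LocWit M σ := by
  have hb : ∀ m < NN M, (bit (ty σ) m ↔ x ∈ I.cSem (dec m)) := by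
    intro m hm; rw [h.2.1]; exact tyN_bit I M x hm
  refine ⟨?_, ?_, ?_, ?_⟩
  · intro r hr c hc h1
    rw [hb (cEx r c) (lt_NN2 (by omega) hr hc), dec_ex] at h1
    obtain ⟨y, hy, hyc⟩ := h1
    obtain ⟨z, hz, hzs⟩ := exists_WP (p := p) hr hc true (y := y) ⟨hy, by simpa using hyc⟩
    obtain ⟨i, hi, he, ht⟩ := h.elt_slot hz
    refine ⟨i, hi, ?_⟩
    rw [he, ht, eN_bit I M _ _ hr, tyN_bit I M _ (NN_ge hc)]
    exact ⟨hzs.1, hzs.2.2 rfl⟩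
  · intro r hr c hc h1
    rw [hb (cAll r c) (lt_NN2 (by omega) hr hc), dec_all] at h1
    have h1' : ¬ ∀ y, I.rSem (decR r) x y → y ∈ I.cSem (dec c) := h1
    push Not at h1'
    obtain ⟨y, hy, hyc⟩ := h1'
    obtain ⟨z, hz, hzs⟩ := exists_WP (p := p) hr hc false (y := y) ⟨hy, by simpa using hyc⟩
    obtain ⟨i, hi, he, ht⟩ := h.elt_slot hz
    refine ⟨i, hi, ?_⟩
    rw [he, ht, eN_bit I M _ _ hr, tyN_bit I M _ (NN_ge hc)]
    exact ⟨hzs.1, fun hz' => Bool.false_ne_true (hzs.2.1 hz')⟩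
  · intro n hn r hr c hc
    rw [hb (cGe n r c) (lt_NN3 (by omega) hn hr hc), dec_ge, h.le_cnt hr hc hn.le]
    rfl
  · intro n hn r hr c hc
    rw [hb (cLe n r c) (lt_NN3 (by omega) hn hr hc), dec_le]
    have h1 := h.le_cnt hr hc (n := n + 1) hn
    have h2 : cnt M σ r c ≤ n ↔ ¬ (n + 1 ≤ cnt M σ r c) := by omega
    rw [h2, h1]
    push_cast
    rw [Cardinal.natCast_add_one_le_iff, not_lt]
    rfl

theorem SatCode_of_sat (hM2 : M % 2 = 0) {RIA : List (Role × Role)} {T : Terminology}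
    (hR : riaCode RIA < M) (hG : I.Good evenRp) (hH : I.ModelsRH RIA) (hT : I.ModelsT T)
    (C : DLConcept) (hCM : C.code < M) {x0 : I.Dom} (hx : x0 ∈ I.cSem C) :
    SatCode M C.code (termCode T) (riaCode RIA) := by
  obtain ⟨w, hw, hb⟩ := exists_bits (fun σ => ∃ x p, Rep I M σ x p) (KK M)
  refine ⟨w, hw, ?_, ?_⟩
  · obtain ⟨σ, hσ⟩ := exists_Rep I M x0 x0
    refine ⟨σ, hσ.1, (hb σ hσ.1).2 ⟨_, _, hσ⟩, ?_⟩
    rw [hσ.2.1, tyN_bit I M _ (NN_ge hCM), dec_code]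
    exact hx
  · intro σ hσ hσw
    obtain ⟨x, p, hr⟩ := (hb σ hσ).1 hσw
    refine ⟨⟨hr.locBool (by omega) hT, hr.locProp hR hG hH, hr.locWit⟩, ?_⟩
    rintro i hi ⟨r, hrM, hrb⟩
    obtain ⟨y, -, he, ht⟩ := hr.slot_elt hi hrb
    obtain ⟨τ, hτ⟩ := exists_Rep I M y x
    refine ⟨τ, hτ.1, (hb τ hτ.1).2 ⟨_, _, hτ⟩, ?_⟩
    obtain ⟨j, hj, he', ht'⟩ := hτ.elt_slot (y := x) (by unfold WP; simp)
    have hbits : ∀ r < M, (bit (ne M τ j) r ↔ bit (ne M σ i) (rinv r)) := by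
      intro r hr'
      rw [he, he', eN_bit I M _ _ hr', eN_bit I M _ _ (rinv_lt hM2 hr'), decR_rinv, rSem_Inv]
    refine ⟨j, hj, by rw [hτ.2.1, ht], by rw [ht', hr.2.1], ⟨rinv r, rinv_lt hM2 hrM, ?_⟩, hbits⟩
    rw [hbits _ (rinv_lt hM2 hrM), rinv_rinv]
    exact hrb

end sound

/-! ### The decision procedure -/

def SatIn (n : ℕ) : Prop :=
  SatCode (2 * (n + 1)) n.unpair.1 n.unpair.2.unpair.1 n.unpair.2.unpair.2

theorem p_SatIn : PrimrecPred SatIn :=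
  p_SatCode (p_mul (p_const 2) (p_add p_id (p_const 1))) (p_fst (p_unpair p_id))
    (p_fst (p_unpair (p_snd (p_unpair p_id)))) (p_snd (p_unpair (p_snd (p_unpair p_id))))

theorem SatIn_iff (C : DLConcept) (T : Terminology) (RIA : List (Role × Role))
    (hC : C.IsSHIQ evenRp RIA) (hT : ∀ p ∈ T, p.1.IsSHIQ evenRp RIA ∧ p.2.IsSHIQ evenRp RIA) :
    SatIn (Nat.pair C.code (Nat.pair (termCode T) (riaCode RIA))) ↔ SatisfiableT evenRp RIA T C := by
  unfold SatIn
  simp only [Nat.unpair_pair]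
  have h1 := Nat.left_le_pair C.code (Nat.pair (termCode T) (riaCode RIA))
  have h2 := Nat.right_le_pair C.code (Nat.pair (termCode T) (riaCode RIA))
  have h3 := Nat.left_le_pair (termCode T) (riaCode RIA)
  have h4 := Nat.right_le_pair (termCode T) (riaCode RIA)
  constructor
  · exact sat_of_SatCode (by omega) (by omega) (by omega) hT C hC (by omega)
  · rintro ⟨I, hG, hH, hM, x, hx⟩
    exact SatCode_of_sat (by omega) (by omega) hG hH hM C (by omega) hx

theorem subsumes_iff (RIA : List (Role × Role)) (T : Terminology) (C D : DLConcept) :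
    SubsumesT evenRp RIA T C D ↔ ¬ SatisfiableT evenRp RIA T (.and C (.neg D)) := by
  constructor
  · rintro h ⟨I, h1, h2, h3, x, hx⟩
    exact hx.2 (h I h1 h2 h3 hx.1)
  · intro h I h1 h2 h3 x hx
    by_contra hn
    exact h ⟨I, h1, h2, h3, x, hx, hn⟩

end SHIQDec

/-- **Theorem 3: decidability of SHIQ.** Over the fixed, effectively
encoded signature, there is a computable function deciding satisfiability of
SHIQ-concepts w.r.t. terminologies and role hierarchies, and hence also one
deciding subsumption. -/
theorem shiq_decidable :
    (∃ f : ℕ → Bool, Computable f ∧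
      ∀ (C : DLConcept) (T : Terminology) (RIA : List (Role × Role)),
        C.IsSHIQ evenRp RIA →
        (∀ p ∈ T, p.1.IsSHIQ evenRp RIA ∧ p.2.IsSHIQ evenRp RIA) →
        (f (Nat.pair C.code (Nat.pair (termCode T) (riaCode RIA))) = true ↔
          SatisfiableT evenRp RIA T C)) ∧
    (∃ g : ℕ → Bool, Computable g ∧
      ∀ (C D : DLConcept) (T : Terminology) (RIA : List (Role × Role)),
        C.IsSHIQ evenRp RIA → D.IsSHIQ evenRp RIA →
        (∀ p ∈ T, p.1.IsSHIQ evenRp RIA ∧ p.2.IsSHIQ evenRp RIA) →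
        (g (Nat.pair C.code (Nat.pair D.code (Nat.pair (termCode T) (riaCode RIA)))) = true ↔
          SubsumesT evenRp RIA T C D)) := by
  classical
  refine ⟨⟨fun n => decide (SHIQDec.SatIn n), SHIQDec.p_SatIn.decide.to_comp, ?_⟩,
    ⟨fun n => decide (¬ SHIQDec.SatIn (Nat.pair (Nat.pair 4 (Nat.pair n.unpair.1
      (Nat.pair 3 n.unpair.2.unpair.1))) n.unpair.2.unpair.2)), ?_, ?_⟩⟩
  · intro C T RIA hC hT
    rw [decide_eq_true_iff]
    exact SHIQDec.SatIn_iff C T RIA hC hT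
  · have h : PrimrecPred fun n : ℕ => ¬ SHIQDec.SatIn (Nat.pair (Nat.pair 4 (Nat.pair n.unpair.1
        (Nat.pair 3 n.unpair.2.unpair.1))) n.unpair.2.unpair.2) := by
      refine SHIQDec.p_not (PrimrecPred.comp SHIQDec.p_SatIn ?_)
      with_reducible repeat' first
        | exact SHIQDec.p_id | exact SHIQDec.p_const _ | apply SHIQDec.p_pair
        | apply SHIQDec.p_fst | apply SHIQDec.p_snd | apply SHIQDec.p_unpair
    exact h.decide.to_comp
  · intro C D T RIA hC hD hT
    rw [decide_eq_true_iff, SHIQDec.subsumes_iff]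
    simp only [Nat.unpair_pair]
    exact not_congr (SHIQDec.SatIn_iff (.and C (.neg D)) T RIA ⟨hC, hD⟩ hT)
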